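/- arXiv:2406.12290 — 3 statements merged into one kernel-verified Lean document; each statement's English description precedes it below -/
import Mathlib

section
/- For every 0 < ε < 1, there exists a measurable set T ⊆ [0,1)² with Lebesgue measure μ(T) ≥ 7/24 - ε and a measurable function f : T → [0, 100/ε²] such that for any x, y, z ∈ T with x + z ≡ 2y (mod 1) coordinatewise, f(x) + f(z) ≥ 2f(y) + (x₁-z₁)² + (x₂-z₂)². -/
open Set MeasureTheory

/-!
The set lies over two ranges of the first coordinate: a lower part over `[0, 1/2 - ε)` and an upper
part over `[1/2, 3/4)`. On each part `x + z ≡ 2y (mod 1)` forces a genuine midpoint, except that in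
the upper part the second coordinate is only seen modulo `1/2`; hence a convex quadratic works on
each part separately, and the upper part can be doubled by a translate by `1/2`. To combine the
parts, add to the quadratic on the upper part a large constant plus a steep linear function of the
first coordinate. The constant handles a lower midpoint of a pair that meets the upper part. The
slope, together with the gap of width `ε`, handles an upper midpoint of a mixed pair. An upper
midpoint of two lower points is excluded by cutting a corner off each part.
-/

section Midpoints

/-- `y` is a midpoint of `x` and `z` on the circle `ℝ / ℤ`, that is, `x + z ≡ 2y (mod 1)`. -/
def IsMidpointModOne (x y z : ℝ) : Prop := ∃ k : ℤ, x + z - 2 * y = k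

/-- `y` is a midpoint of `x` and `z` on the torus `ℝ² / ℤ²`. -/
def IsTorusMidpoint (x y z : ℝ × ℝ) : Prop :=
  IsMidpointModOne x.1 y.1 z.1 ∧ IsMidpointModOne x.2 y.2 z.2

/-- The inequality asked of the weight `f` when `y` is a torus midpoint of `x` and `z`: midpoint
convexity with a gain equal to the squared Euclidean distance of the representatives. -/
def MidpointIneq (f : ℝ × ℝ → ℝ) (x y z : ℝ × ℝ) : Prop :=
  2 * f y + (x.1 - z.1) ^ 2 + (x.2 - z.2) ^ 2 ≤ f x + f z

/-- Uniform midpoint convexity on `T`, where midpoints are taken on the torus but distances in the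
plane. -/
def TorusMidconvexOn (T : Set (ℝ × ℝ)) (f : ℝ × ℝ → ℝ) : Prop :=
  ∀ ⦃x⦄, x ∈ T → ∀ ⦃y⦄, y ∈ T → ∀ ⦃z⦄, z ∈ T → IsTorusMidpoint x y z → MidpointIneq f x y z

variable {x y z : ℝ}

lemma IsMidpointModOne.symm (h : IsMidpointModOne x y z) : IsMidpointModOne z y x := by
  rwa [IsMidpointModOne, add_comm z x]

lemma IsTorusMidpoint.symm {x y z : ℝ × ℝ} (h : IsTorusMidpoint x y z) : IsTorusMidpoint z y x :=
  ⟨h.1.symm, h.2.symm⟩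

lemma MidpointIneq.symm {f : ℝ × ℝ → ℝ} {x y z : ℝ × ℝ} (h : MidpointIneq f x y z) :
    MidpointIneq f z y x := by
  rwa [MidpointIneq, sub_sq_comm z.1, sub_sq_comm z.2, add_comm (f z)]

lemma IsMidpointModOne.eq_intCast (h : IsMidpointModOne x y z) {m : ℤ}
    (hm : x + z - 2 * y ∈ Ioo (m - 1 : ℝ) (m + 1)) : x + z - 2 * y = m := by
  obtain ⟨k, hk⟩ := h
  rw [hk] at hm ⊢
  have hlower : m - 1 < k := by exact_mod_cast hm.1
  have hupper : k < m + 1 := by exact_mod_cast hm.2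
  congr 1
  omega

lemma IsMidpointModOne.add_eq_two_mul (h : IsMidpointModOne x y z)
    (h0 : x + z - 2 * y ∈ Ioo (-1 : ℝ) 1) : x + z = 2 * y := by
  have := h.eq_intCast (m := 0) (by simpa using h0)
  simpa [sub_eq_zero] using this

lemma IsMidpointModOne.add_eq_two_mul_of_mem_Ico (h : IsMidpointModOne x y z) {a : ℝ}
    (hx : x ∈ Ico a (a + 1 / 2)) (hy : y ∈ Ico a (a + 1 / 2)) (hz : z ∈ Ico a (a + 1 / 2)) :
    x + z = 2 * y :=
  h.add_eq_two_mul ⟨by linarith [hx.1, hz.1, hy.2], by linarith [hx.2, hz.2, hy.1]⟩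

lemma two_mul_sq_add_sq_of_add_eq_two_mul {R : Type*} [CommRing R] {a b c : R}
    (h : a + b = 2 * c) : 2 * (a ^ 2 + b ^ 2) = 4 * c ^ 2 + (a - b) ^ 2 := by
  linear_combination (a + b + 2 * c) * h

theorem TorusMidconvexOn.union {L U : Set (ℝ × ℝ)} {f : ℝ × ℝ → ℝ}
    (hL : TorusMidconvexOn L f) (hU : TorusMidconvexOn U f)
    (hULT : ∀ x ∈ U, ∀ y ∈ L, ∀ z ∈ L ∪ U, MidpointIneq f x y z)
    (hUUL : ∀ x ∈ U, ∀ y ∈ U, ∀ z ∈ L, IsTorusMidpoint x y z → MidpointIneq f x y z)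
    (hLUL : ∀ x ∈ L, ∀ y ∈ U, ∀ z ∈ L, ¬ IsTorusMidpoint x y z) :
    TorusMidconvexOn (L ∪ U) f := by
  intro x hx y hy z hz h
  rcases hx with hxL | hxU
  · rcases hy with hyL | hyU
    · rcases hz with hzL | hzU
      · exact hL hxL hyL hzL h
      · exact (hULT z hzU y hyL x (.inl hxL)).symm
    · rcases hz with hzL | hzU
      · exact (hLUL x hxL y hyU z hzL h).elim
      · exact (hUUL z hzU y hyU x hxL h.symm).symm
  · rcases hy with hyL | hyU
    · exact hULT x hxU y hyL z hz
    · rcases hz with hzL | hzU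
      · exact hUUL x hxU y hyU z hzL h
      · exact hU hxU hyU hzU h

end Midpoints

section HalfFract

/-- The representative of `t` modulo `1/2` in `[0, 1/2)`. Doubling kills translations by `1/2`, so
this is all that `x + z ≡ 2y (mod 1)` sees of `y`. -/
noncomputable def halfFract (t : ℝ) : ℝ := Int.fract (2 * t) / 2

variable {x y z : ℝ}

lemma measurable_halfFract : Measurable halfFract := by
  unfold halfFract
  fun_prop

lemma halfFract_lt_half (t : ℝ) : halfFract t < 1 / 2 := by
  rw [halfFract]
  linarith [Int.fract_lt_one (2 * t)]

lemma halfFract_sub_half (t : ℝ) : halfFract (t - 1 / 2) = halfFract t := by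
  rw [halfFract, halfFract, mul_sub, mul_one_div_cancel two_ne_zero, Int.fract_sub_one]

lemma halfFract_of_mem_Ico (hx : x ∈ Ico (0 : ℝ) (1 / 2)) : halfFract x = x := by
  rw [halfFract, Int.fract_eq_self.2 ⟨by linarith [hx.1], by linarith [hx.2]⟩]
  ring

lemma eq_halfFract_or_eq_halfFract_add_half (hx : x ∈ Ico (0 : ℝ) 1) :
    x = halfFract x ∨ x = halfFract x + 1 / 2 := by
  rcases lt_or_ge x (1 / 2) with hlt | hge
  · exact .inl (halfFract_of_mem_Ico ⟨hx.1, hlt⟩).symm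
  · right
    rw [← halfFract_sub_half, halfFract_of_mem_Ico ⟨by linarith, by linarith [hx.2]⟩]
    ring

lemma IsMidpointModOne.mid_halfFract (h : IsMidpointModOne x y z) :
    IsMidpointModOne x (halfFract y) z := by
  obtain ⟨k, hk⟩ := h
  refine ⟨k + ⌊2 * y⌋, ?_⟩
  rw [halfFract, Int.fract, Int.cast_add, ← hk]
  ring

lemma IsMidpointModOne.halfFract_add_eq_and_sub_eq (h : IsMidpointModOne x y z)
    (hx : x ∈ Ico (0 : ℝ) 1) (hz : z ∈ Ico (0 : ℝ) 1) (hx' : 1 / 4 < halfFract x)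
    (hy' : 1 / 4 < halfFract y) (hz' : 1 / 4 < halfFract z) :
    halfFract x + halfFract z = 2 * halfFract y ∧
      halfFract x - halfFract z = x - z := by
  have hmid := h.mid_halfFract
  have hxlt := halfFract_lt_half x
  have hylt := halfFract_lt_half y
  have hzlt := halfFract_lt_half z
  rcases eq_halfFract_or_eq_halfFract_add_half hx with hxp | hxp <;>
    rcases eq_halfFract_or_eq_halfFract_add_half hz with hzq | hzq
  · have := hmid.add_eq_two_mul ⟨by linarith, by linarith⟩
    constructor <;> linarith
  -- In the two mixed cases `x + z - 2 * halfFract y` lies strictly between `0` and `1`.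
  · have := hmid.add_eq_two_mul ⟨by linarith, by linarith⟩
    linarith
  · have := hmid.add_eq_two_mul ⟨by linarith, by linarith⟩
    linarith
  · have := hmid.eq_intCast (m := 1) ⟨by push_cast; linarith, by push_cast; linarith⟩
    push_cast at this
    constructor <;> linarith

end HalfFract

section Area

lemma integral_max_zero {a b : ℝ} (ha : a ≤ 0) (hb : 0 ≤ b) :
    ∫ s in a..b, max 0 s = b ^ 2 / 2 := by
  have hcont : Continuous fun s : ℝ => max 0 s := by fun_prop
  have hneg : ∫ s in a..0, max 0 s = ∫ _ in a..0, (0 : ℝ) :=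
    intervalIntegral.integral_congr fun s hs => max_eq_left (uIcc_of_le ha ▸ hs).2
  have hpos : ∫ s in (0 : ℝ)..b, max 0 s = ∫ s in (0 : ℝ)..b, s :=
    intervalIntegral.integral_congr fun s hs => max_eq_right (uIcc_of_le hb ▸ hs).1
  rw [← intervalIntegral.integral_add_adjacent_intervals (hcont.intervalIntegrable a 0)
    (hcont.intervalIntegrable 0 b), hneg, hpos, intervalIntegral.integral_zero, integral_id]
  ring

lemma volume_regionBetween_Ico {f g : ℝ → ℝ} {a b : ℝ} (hab : a ≤ b) (hf : Continuous f)
    (hg : Continuous g) (hfg : ∀ s ∈ Ico a b, f s ≤ g s) :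
    volume (regionBetween f g (Ico a b)) = ENNReal.ofReal (∫ s in a..b, (g s - f s)) := by
  rw [Measure.volume_eq_prod, volume_regionBetween_eq_integral
    (hf.integrableOn_Icc.mono_set Ico_subset_Icc_self)
    (hg.integrableOn_Icc.mono_set Ico_subset_Icc_self) measurableSet_Ico hfg,
    intervalIntegral.integral_of_le hab, integral_Ico_eq_integral_Ioc]
  simp only [Pi.sub_apply]

end Area

section Regions

/-- The lower part of the set: the square `[0, 1/2) × (0, 1/2)` without the corner
`x₂ ≥ x₁ + 1/6` and without a strip of width `ε` that separates it from the upper part. -/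
def lowerRegion (ε : ℝ) : Set (ℝ × ℝ) :=
  regionBetween (fun _ => 0) (fun s => 1 / 2 - max 0 (1 / 3 - s)) (Ico 0 (1 / 2 - ε))

/-- One of the two copies that make up the upper part: the square `[1/2, 3/4) × (1/4, 1/2)` without
the corner `x₂ ≤ x₁ - 1/3`. -/
def upperCell : Set (ℝ × ℝ) :=
  regionBetween (fun s => 1 / 4 + max 0 (s - 7 / 12)) (fun _ => 1 / 2) (Ico (1 / 2) (3 / 4))

/-- The upper part of the set: `upperCell` and its vertical translate by `1/2`. -/
def upperRegion : Set (ℝ × ℝ) := upperCell ∪ (· - (0, 1 / 2)) ⁻¹' upperCell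

variable {ε : ℝ} {x y z : ℝ × ℝ}

lemma measurableSet_lowerRegion (ε : ℝ) : MeasurableSet (lowerRegion ε) :=
  measurableSet_regionBetween (by fun_prop) (by fun_prop) measurableSet_Ico

lemma measurableSet_upperCell : MeasurableSet upperCell :=
  measurableSet_regionBetween (by fun_prop) (by fun_prop) measurableSet_Ico

lemma measurableSet_preimage_upperCell :
    MeasurableSet ((· - ((0 : ℝ), (1 / 2 : ℝ))) ⁻¹' upperCell) :=
  measurableSet_upperCell.preimage (by fun_prop)

lemma measurableSet_upperRegion : MeasurableSet upperRegion :=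
  measurableSet_upperCell.union measurableSet_preimage_upperCell

lemma mem_lowerRegion_iff : x ∈ lowerRegion ε ↔
    x.1 ∈ Ico 0 (1 / 2 - ε) ∧ x.2 ∈ Ioo 0 (1 / 2) ∧ x.2 < x.1 + 1 / 6 := by
  have hcut : x.2 < 1 / 2 - max 0 (1 / 3 - x.1) ↔ x.2 < 1 / 2 ∧ x.2 < x.1 + 1 / 6 := by
    rw [lt_sub_comm, max_lt_iff]
    constructor <;> rintro ⟨h, h'⟩ <;> constructor <;> linarith
  simp only [lowerRegion, regionBetween, mem_ofPred_eq, mem_Ioo, hcut, and_assoc]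

lemma mem_upperCell_iff : x ∈ upperCell ↔
    x.1 ∈ Ico (1 / 2) (3 / 4) ∧ x.2 ∈ Ioo (1 / 4) (1 / 2) ∧ x.1 - 1 / 3 < x.2 := by
  have hcut : 1 / 4 + max 0 (x.1 - 7 / 12) < x.2 ↔ 1 / 4 < x.2 ∧ x.1 - 1 / 3 < x.2 := by
    rw [← lt_sub_iff_add_lt', max_lt_iff]
    constructor <;> rintro ⟨h, h'⟩ <;> constructor <;> linarith
  simp only [upperCell, regionBetween, mem_ofPred_eq, mem_Ioo, hcut]
  tauto

lemma halfFract_mem_upperCell (hx : x ∈ upperRegion) : (x.1, halfFract x.2) ∈ upperCell := by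
  have halfFract_eq {w : ℝ × ℝ} (hw : w ∈ upperCell) : halfFract w.2 = w.2 :=
    have hw2 := (mem_upperCell_iff.1 hw).2.1
    halfFract_of_mem_Ico ⟨by linarith [hw2.1], hw2.2⟩
  rcases hx with hx | hx
  · rwa [halfFract_eq hx]
  · have hsnd : halfFract x.2 = x.2 - 1 / 2 := (halfFract_sub_half x.2).symm.trans (halfFract_eq hx)
    rw [hsnd, ← sub_zero x.1]
    exact hx

lemma lowerRegion_subset (hε : 0 ≤ ε) : lowerRegion ε ⊆ Ico (0 : ℝ) 1 ×ˢ Ico (0 : ℝ) 1 := by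
  intro x hx
  obtain ⟨⟨h1, h1'⟩, ⟨h2, h2'⟩, -⟩ := mem_lowerRegion_iff.1 hx
  exact ⟨⟨h1, by linarith⟩, h2.le, by linarith⟩

lemma upperRegion_subset : upperRegion ⊆ Ico (0 : ℝ) 1 ×ˢ Ico (0 : ℝ) 1 := by
  rintro x (hx | hx) <;> obtain ⟨⟨h1, h1'⟩, ⟨h2, h2'⟩, -⟩ := mem_upperCell_iff.1 hx
  · exact ⟨⟨by linarith, by linarith⟩, by linarith, by linarith⟩
  · rw [Prod.fst_sub] at h1 h1'
    rw [Prod.snd_sub] at h2 h2'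
    exact ⟨⟨by linarith, by linarith⟩, by linarith, by linarith⟩

lemma lowerRegion_union_upperRegion_subset (hε : 0 ≤ ε) :
    lowerRegion ε ∪ upperRegion ⊆ Ico (0 : ℝ) 1 ×ˢ Ico (0 : ℝ) 1 :=
  union_subset (lowerRegion_subset hε) upperRegion_subset

lemma disjoint_lowerRegion_upperRegion (hε : 0 ≤ ε) : Disjoint (lowerRegion ε) upperRegion :=
  disjoint_left.2 fun _ hL hU => by
    linarith [(mem_lowerRegion_iff.1 hL).1.2,
      (mem_upperCell_iff.1 (halfFract_mem_upperCell hU)).1.1]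

lemma volume_lowerRegion_zero : volume (lowerRegion 0) = ENNReal.ofReal (7 / 36) := by
  have hcorner : ∫ s in (0 : ℝ)..(1 / 2), max 0 (1 / 3 - s) = 1 / 18 := by
    rw [intervalIntegral.integral_comp_sub_left (fun s => max 0 s),
      integral_max_zero (by norm_num) (by norm_num)]
    norm_num
  rw [lowerRegion, sub_zero, volume_regionBetween_Ico (by norm_num) (by fun_prop) (by fun_prop)]
  · simp only [sub_zero]
    rw [intervalIntegral.integral_sub intervalIntegrable_const
      (Continuous.intervalIntegrable (by fun_prop) _ _), hcorner,
      intervalIntegral.integral_const]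
    norm_num
  · intro s hs
    rw [sub_nonneg]
    exact max_le (by norm_num) (by linarith [hs.1])

lemma volume_lowerRegion_zero_le_add (ε : ℝ) :
    volume (lowerRegion 0) ≤ volume (lowerRegion ε) + ENNReal.ofReal ε := by
  have hcover : lowerRegion 0 ⊆ lowerRegion ε ∪ Ico (1 / 2 - ε) (1 / 2) ×ˢ Ioo (0 : ℝ) 1 := by
    intro x hx
    obtain ⟨⟨h1, h1'⟩, h2, hcut⟩ := mem_lowerRegion_iff.1 hx
    rcases lt_or_ge x.1 (1 / 2 - ε) with hlt | hge
    · exact .inl (mem_lowerRegion_iff.2 ⟨⟨h1, hlt⟩, h2, hcut⟩)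
    · exact .inr ⟨⟨hge, by linarith⟩, h2.1, by linarith [h2.2]⟩
  have hstrip : volume (Ico (1 / 2 - ε) (1 / 2) ×ˢ Ioo (0 : ℝ) 1) = ENNReal.ofReal ε := by
    rw [Measure.volume_eq_prod, Measure.prod_prod, Real.volume_Ico, Real.volume_Ioo]
    simp
  exact hstrip ▸ (measure_mono hcover).trans (measure_union_le _ _)

lemma volume_upperCell : volume upperCell = ENNReal.ofReal (7 / 144) := by
  have hcorner : ∫ s in (1 / 2 : ℝ)..(3 / 4), max 0 (s - 7 / 12) = 1 / 72 := by
    rw [intervalIntegral.integral_comp_sub_right (fun s => max 0 s),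
      integral_max_zero (by norm_num) (by norm_num)]
    norm_num
  rw [upperCell, volume_regionBetween_Ico (by norm_num) (by fun_prop) (by fun_prop)]
  · simp only [← sub_sub]
    rw [intervalIntegral.integral_sub intervalIntegrable_const
      (Continuous.intervalIntegrable (by fun_prop) _ _), hcorner,
      intervalIntegral.integral_const]
    norm_num
  · intro s hs
    rw [← le_sub_iff_add_le']
    exact max_le (by norm_num) (by linarith [hs.2])

lemma volume_upperRegion : volume upperRegion = ENNReal.ofReal (7 / 72) := by
  have hdisj : Disjoint upperCell ((· - (0, 1 / 2)) ⁻¹' upperCell) :=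
    disjoint_left.2 fun x hx hx' => by
      have hlower := (mem_upperCell_iff.1 hx').2.1.1
      rw [Prod.snd_sub] at hlower
      linarith [(mem_upperCell_iff.1 hx).2.1.2]
  rw [upperRegion, measure_union hdisj measurableSet_preimage_upperCell,
    (measurePreserving_sub_right volume _).measure_preimage
      measurableSet_upperCell.nullMeasurableSet, volume_upperCell,
    ← ENNReal.ofReal_add (by norm_num) (by norm_num)]
  norm_num

lemma le_volume_lowerRegion_union_upperRegion (hε : 0 ≤ ε) :
    ENNReal.ofReal (7 / 24 - ε) ≤ volume (lowerRegion ε ∪ upperRegion) := by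
  rw [ENNReal.ofReal_sub _ hε, tsub_le_iff_right,
    measure_union (disjoint_lowerRegion_upperRegion hε) measurableSet_upperRegion]
  calc ENNReal.ofReal (7 / 24)
      = volume (lowerRegion 0) + volume upperRegion := by
        rw [volume_lowerRegion_zero, volume_upperRegion,
          ← ENNReal.ofReal_add (by norm_num) (by norm_num)]
        norm_num
    _ ≤ volume (lowerRegion ε) + ENNReal.ofReal ε + volume upperRegion := by
        gcongr
        exact volume_lowerRegion_zero_le_add ε
    _ = volume (lowerRegion ε) + volume upperRegion + ENNReal.ofReal ε := add_right_comm _ _ _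

/- Write `r` for `y.2` modulo `1/2`. A midpoint would give `2 * y.1 = x.1 + z.1 + 1` and
`2 * r = x.2 + z.2`, whereas the two cuts give `x.2 + z.2 < x.1 + z.1 + 1/3 = 2 * (y.1 - 1/3)` and
`y.1 - 1/3 < r`. -/
lemma not_isTorusMidpoint_of_mem_lowerRegion (hε : 0 ≤ ε) (hx : x ∈ lowerRegion ε)
    (hy : y ∈ upperRegion) (hz : z ∈ lowerRegion ε) : ¬ IsTorusMidpoint x y z := by
  rintro ⟨h₁, h₂⟩
  obtain ⟨⟨hx1, hx1'⟩, ⟨hx2, hx2'⟩, hxcut⟩ := mem_lowerRegion_iff.1 hx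
  obtain ⟨⟨hy1, hy1'⟩, ⟨hy2, hy2'⟩, hycut⟩ := mem_upperCell_iff.1 (halfFract_mem_upperCell hy)
  obtain ⟨⟨hz1, hz1'⟩, ⟨hz2, -⟩, hzcut⟩ := mem_lowerRegion_iff.1 hz
  have hfst := h₁.eq_intCast (m := -1)
    ⟨by push_cast; linarith only [hx1, hz1, hy1'],
      by push_cast; linarith only [hx1', hz1', hy1, hε]⟩
  have hsnd := h₂.mid_halfFract.add_eq_two_mul ⟨by linarith, by linarith⟩
  push_cast at hfst
  linarith

end Regions

section Weight

/-- The term of the weight that depends on the part of the set: zero on the lower part, affine and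
steep in the first coordinate on the upper part. -/
noncomputable def penalty (ε s : ℝ) : ℝ := if s < 1 / 2 then 0 else 4 + 10 / ε * (s - 1 / 2)

/-- The function `f` of the theorem: a quadratic in the coordinates, the second of them reduced
modulo `1/2`, plus the penalty of the upper part. -/
noncomputable def weight (ε : ℝ) (x : ℝ × ℝ) : ℝ :=
  2 * (x.1 ^ 2 + halfFract x.2 ^ 2) + penalty ε x.1

variable {ε : ℝ} {x y z : ℝ × ℝ}

lemma measurable_penalty (ε : ℝ) : Measurable (penalty ε) :=
  Measurable.ite measurableSet_Iio measurable_const (by fun_prop)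

lemma measurable_weight (ε : ℝ) : Measurable (weight ε) := by
  have := measurable_halfFract
  have := measurable_penalty ε
  unfold weight
  fun_prop

lemma weight_of_mem_lowerRegion (hε : 0 ≤ ε) (hx : x ∈ lowerRegion ε) :
    weight ε x = 2 * (x.1 ^ 2 + x.2 ^ 2) := by
  obtain ⟨⟨-, h1⟩, ⟨h2, h2'⟩, -⟩ := mem_lowerRegion_iff.1 hx
  rw [weight, penalty, halfFract_of_mem_Ico ⟨h2.le, h2'⟩, if_pos (by linarith), add_zero]

lemma weight_of_mem_upperRegion (hx : x ∈ upperRegion) :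
    weight ε x = 2 * (x.1 ^ 2 + halfFract x.2 ^ 2) + (4 + 10 / ε * (x.1 - 1 / 2)) := by
  have h1 := (mem_upperCell_iff.1 (halfFract_mem_upperCell hx)).1.1
  rw [weight, penalty, if_neg h1.not_gt]

lemma weight_mem_Icc_of_mem_lowerRegion (hε : 0 ≤ ε) (hx : x ∈ lowerRegion ε) :
    weight ε x ∈ Icc 0 1 := by
  rw [weight_of_mem_lowerRegion hε hx]
  obtain ⟨⟨h1, h1'⟩, ⟨h2, h2'⟩, -⟩ := mem_lowerRegion_iff.1 hx
  exact ⟨by positivity, by nlinarith⟩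

lemma four_le_weight_of_mem_upperRegion (hε : 0 ≤ ε) (hx : x ∈ upperRegion) :
    4 ≤ weight ε x := by
  have h1 := (mem_upperCell_iff.1 (halfFract_mem_upperCell hx)).1.1
  have hslope : 0 ≤ 10 / ε * (x.1 - 1 / 2) := mul_nonneg (by positivity) (sub_nonneg.2 h1)
  rw [weight_of_mem_upperRegion hx]
  linarith [sq_nonneg x.1, sq_nonneg (halfFract x.2)]

lemma weight_nonneg (hε : 0 ≤ ε) (hx : x ∈ lowerRegion ε ∪ upperRegion) : 0 ≤ weight ε x := by
  rcases hx with hx | hx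
  · exact (weight_mem_Icc_of_mem_lowerRegion hε hx).1
  · linarith [four_le_weight_of_mem_upperRegion hε hx]

lemma quadratic_le_of_mem_upperRegion (hx : x ∈ upperRegion) :
    2 * (x.1 ^ 2 + halfFract x.2 ^ 2) ≤ 2 := by
  obtain ⟨⟨h1, h1'⟩, ⟨h2, h2'⟩, -⟩ := mem_upperCell_iff.1 (halfFract_mem_upperCell hx)
  dsimp only at h1 h1' h2 h2'
  nlinarith

lemma weight_le_of_mem_upperRegion (hε : 0 ≤ ε) (hx : x ∈ upperRegion) :
    weight ε x ≤ 6 + 5 / (2 * ε) := by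
  have h1 := (mem_upperCell_iff.1 (halfFract_mem_upperCell hx)).1.2
  have hslope : 10 / ε * (x.1 - 1 / 2) ≤ 5 / (2 * ε) :=
    calc 10 / ε * (x.1 - 1 / 2) ≤ 10 / ε * (1 / 4) := by gcongr; linarith
      _ = 5 / (2 * ε) := by ring
  rw [weight_of_mem_upperRegion hx]
  linarith [quadratic_le_of_mem_upperRegion hx]

lemma weight_mem_Icc (hε : 0 < ε) (hε1 : ε < 1) (hx : x ∈ lowerRegion ε ∪ upperRegion) :
    weight ε x ∈ Icc 0 (100 / ε ^ 2) := by
  refine ⟨weight_nonneg hε.le hx, ?_⟩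
  rcases hx with hx | hx
  · calc weight ε x ≤ 1 := (weight_mem_Icc_of_mem_lowerRegion hε.le hx).2
      _ ≤ 100 / ε ^ 2 := by
        rw [le_div_iff₀ (by positivity)]
        nlinarith
  · calc weight ε x ≤ 6 + 5 / (2 * ε) := weight_le_of_mem_upperRegion hε.le hx
      _ = (6 * ε ^ 2 + 5 / 2 * ε) / ε ^ 2 := by field_simp
      _ ≤ 100 / ε ^ 2 := by
        gcongr
        nlinarith

lemma torusMidconvexOn_weight_lowerRegion (hε : 0 ≤ ε) :
    TorusMidconvexOn (lowerRegion ε) (weight ε) := by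
  rintro x hx y hy z hz ⟨h₁, h₂⟩
  rw [MidpointIneq, weight_of_mem_lowerRegion hε hx, weight_of_mem_lowerRegion hε hy,
    weight_of_mem_lowerRegion hε hz]
  have mem_Ico {w : ℝ × ℝ} (hw : w ∈ lowerRegion ε) :
      w.1 ∈ Ico 0 (0 + 1 / 2 : ℝ) ∧ w.2 ∈ Ico 0 (0 + 1 / 2 : ℝ) := by
    obtain ⟨⟨h1, h1'⟩, ⟨h2, h2'⟩, -⟩ := mem_lowerRegion_iff.1 hw
    exact ⟨⟨h1, by linarith⟩, h2.le, by linarith⟩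
  have hfst := h₁.add_eq_two_mul_of_mem_Ico (mem_Ico hx).1 (mem_Ico hy).1 (mem_Ico hz).1
  have hsnd := h₂.add_eq_two_mul_of_mem_Ico (mem_Ico hx).2 (mem_Ico hy).2 (mem_Ico hz).2
  linarith [two_mul_sq_add_sq_of_add_eq_two_mul hfst, two_mul_sq_add_sq_of_add_eq_two_mul hsnd]

lemma torusMidconvexOn_weight_upperRegion (ε : ℝ) : TorusMidconvexOn upperRegion (weight ε) := by
  rintro x hx y hy z hz ⟨h₁, h₂⟩
  rw [MidpointIneq, weight_of_mem_upperRegion hx, weight_of_mem_upperRegion hy,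
    weight_of_mem_upperRegion hz]
  have mem_Ico {w : ℝ × ℝ} (hw : w ∈ upperRegion) : w.1 ∈ Ico (1 / 2) (1 / 2 + 1 / 2 : ℝ) :=
    Ico_subset_Ico_right (by norm_num) (mem_upperCell_iff.1 (halfFract_mem_upperCell hw)).1
  have quarter_lt {w : ℝ × ℝ} (hw : w ∈ upperRegion) : 1 / 4 < halfFract w.2 :=
    (mem_upperCell_iff.1 (halfFract_mem_upperCell hw)).2.1.1
  have hfst := h₁.add_eq_two_mul_of_mem_Ico (mem_Ico hx) (mem_Ico hy) (mem_Ico hz)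
  obtain ⟨hsnd, hsub⟩ := h₂.halfFract_add_eq_and_sub_eq (upperRegion_subset hx).2
    (upperRegion_subset hz).2 (quarter_lt hx) (quarter_lt hy) (quarter_lt hz)
  have hslope : 10 / ε * (x.1 - 1 / 2) + 10 / ε * (z.1 - 1 / 2) =
      2 * (10 / ε * (y.1 - 1 / 2)) := by
    linear_combination 10 / ε * hfst
  rw [← hsub]
  linarith [two_mul_sq_add_sq_of_add_eq_two_mul hfst, two_mul_sq_add_sq_of_add_eq_two_mul hsnd]

lemma sq_sub_le_one_of_mem_Ico {a b : ℝ} (ha : a ∈ Ico (0 : ℝ) 1) (hb : b ∈ Ico (0 : ℝ) 1) :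
    (a - b) ^ 2 ≤ 1 :=
  (sq_le_one_iff_abs_le_one _).2 (abs_le.2 ⟨by linarith [ha.1, hb.2], by linarith [ha.2, hb.1]⟩)

lemma midpointIneq_weight_of_upper_lower (hε : 0 ≤ ε) (hx : x ∈ upperRegion)
    (hy : y ∈ lowerRegion ε) (hz : z ∈ lowerRegion ε ∪ upperRegion) :
    MidpointIneq (weight ε) x y z := by
  have hxI := upperRegion_subset hx
  have hzI := lowerRegion_union_upperRegion_subset hε hz
  rw [MidpointIneq]
  linarith [four_le_weight_of_mem_upperRegion hε hx, (weight_mem_Icc_of_mem_lowerRegion hε hy).2,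
    weight_nonneg hε hz, sq_sub_le_one_of_mem_Ico hxI.1 hzI.1, sq_sub_le_one_of_mem_Ico hxI.2 hzI.2]

lemma midpointIneq_weight_of_upper_upper_lower (hε : 0 < ε) (hx : x ∈ upperRegion)
    (hy : y ∈ upperRegion) (hz : z ∈ lowerRegion ε) (h : IsMidpointModOne x.1 y.1 z.1) :
    MidpointIneq (weight ε) x y z := by
  obtain ⟨hx1, hx1'⟩ := (mem_upperCell_iff.1 (halfFract_mem_upperCell hx)).1
  obtain ⟨hy1, hy1'⟩ := (mem_upperCell_iff.1 (halfFract_mem_upperCell hy)).1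
  obtain ⟨hz1, hz1'⟩ := (mem_lowerRegion_iff.1 hz).1
  have hfst : x.1 + z.1 = 2 * y.1 := h.add_eq_two_mul ⟨by linarith, by linarith⟩
  have hgap : 2 * (10 / ε * (y.1 - 1 / 2)) + 10 ≤ 10 / ε * (x.1 - 1 / 2) :=
    calc 2 * (10 / ε * (y.1 - 1 / 2)) + 10
        = 2 * (10 / ε * (y.1 - 1 / 2)) + 10 / ε * ε := by rw [div_mul_cancel₀ _ hε.ne']
      _ ≤ 2 * (10 / ε * (y.1 - 1 / 2)) + 10 / ε * (1 / 2 - z.1) := by gcongr; linarith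
      _ = 10 / ε * (x.1 - 1 / 2) := by linear_combination -(10 / ε) * hfst
  have hxI := upperRegion_subset hx
  have hzI := lowerRegion_subset hε.le hz
  rw [MidpointIneq, weight_of_mem_upperRegion hx, weight_of_mem_upperRegion hy]
  linarith [quadratic_le_of_mem_upperRegion hy, (weight_mem_Icc_of_mem_lowerRegion hε.le hz).1,
    sq_nonneg x.1, sq_nonneg (halfFract x.2), sq_sub_le_one_of_mem_Ico hxI.1 hzI.1,
    sq_sub_le_one_of_mem_Ico hxI.2 hzI.2]

theorem torusMidconvexOn_weight (hε : 0 < ε) :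
    TorusMidconvexOn (lowerRegion ε ∪ upperRegion) (weight ε) :=
  (torusMidconvexOn_weight_lowerRegion hε.le).union (torusMidconvexOn_weight_upperRegion ε)
    (fun _ hx _ hy _ hz => midpointIneq_weight_of_upper_lower hε.le hx hy hz)
    (fun _ hx _ hy _ hz h => midpointIneq_weight_of_upper_upper_lower hε hx hy hz h.1)
    (fun _ hx _ hy _ hz => not_isTorusMidpoint_of_mem_lowerRegion hε.le hx hy hz)

end Weight

theorem stmt_17 (ε : ℝ) (hε : 0 < ε) (hε1 : ε < 1) :
    ∃ (T : Set (ℝ × ℝ)) (f : ℝ × ℝ → ℝ),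
      T ⊆ Ico (0:ℝ) 1 ×ˢ Ico (0:ℝ) 1 ∧ MeasurableSet T ∧
      ENNReal.ofReal (7/24 - ε) ≤ volume T ∧
      Measurable f ∧ (∀ x ∈ T, f x ∈ Icc (0:ℝ) (100/ε^2)) ∧
      ∀ x ∈ T, ∀ y ∈ T, ∀ z ∈ T,
        (∃ k : ℤ, x.1 + z.1 - 2 * y.1 = k) → (∃ k : ℤ, x.2 + z.2 - 2 * y.2 = k) →
        f x + f z ≥ 2 * f y + (x.1 - z.1)^2 + (x.2 - z.2)^2 := by
  refine ⟨lowerRegion ε ∪ upperRegion, weight ε, lowerRegion_union_upperRegion_subset hε.le,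
    (measurableSet_lowerRegion ε).union measurableSet_upperRegion,
    le_volume_lowerRegion_union_upperRegion hε.le, measurable_weight ε,
    fun x hx => weight_mem_Icc hε hε1 hx, fun x hx y hy z hz h₁ h₂ => ?_⟩
  exact torusMidconvexOn_weight hε hx hy hz ⟨h₁, h₂⟩
end

section
/- For any 0 < δ < 1 and any even positive integer n, there exists a measurable set S ⊆ [0,1)ⁿ with Lebesgue measure μ(S) ≥ 10⁻⁵ δ² n⁻³ (7/24)^(n/2) such that for any x, y, z ∈ S with x + z ≡ 2y (mod 1) coordinatewise, we have |xᵢ - zᵢ| < δ for all i = 1, …, n. -/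
open Set MeasureTheory

/-!
As in Behrend's construction, `S` is a thin level shell of a function that is uniformly convex along
three-term progressions; here the progressions are taken modulo the integers. If `f` satisfies
`‖x - z‖ ^ 2 / 2 ≤ f x + f z - 2 * f y` whenever `x + z ≡ 2 * y`, then on the shell `a ≤ f < a + w`
every progression has `‖x - z‖ ^ 2 < 4 * w`, and some shell is large by pigeonhole. The property
passes to products, so everything reduces to a set of area `7 / 24` in the unit square carrying such
a function.

For `q = (u, v)` in the square put `r = 2 * v - u`. The planar set has a part with `u < 1 / 2`, and
for `1 / 2 ≤ u` two copies, `1 / 2` apart in `v`, of one region; raising the lower copy onto the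
upper one changes `r` by `1`. The function is `|q| ^ 2` (after raising) plus a large convex penalty
in `u`. Wherever the penalty is not affine along a progression, it has a gain that dominates all
else. The penalty would lose only if `u₁ + u₃ = 2 * u₂ - 1`, which is excluded by a line separating
the first part from the translate of the second by `(-1 / 2, -1 / 2)` in the `(u, r)` plane,
together with a parity argument. Where the penalty is affine, the progression is a genuine one in
`ℝ ^ 2` after raising, and the parallelogram law applies.
-/

section ProgressionConvex

/-- `f` is uniformly midpoint convex on `B` along the three-term progressions `x, y, z` modulo the
subgroup `L`, that is, the triples with `x + z ≡ 2 • y` modulo `L`. The constant `1 / 2` is the one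
attained by the squared norm of an inner product space when `L = ⊥`. -/
def ProgressionConvexOn {E : Type*} [SeminormedAddCommGroup E] (L : AddSubgroup E) (B : Set E)
    (f : E → ℝ) : Prop :=
  ∀ ⦃x⦄, x ∈ B → ∀ ⦃y⦄, y ∈ B → ∀ ⦃z⦄, z ∈ B → x + z - 2 • y ∈ L →
    ‖x - z‖ ^ 2 / 2 ≤ f x + f z - 2 * f y

namespace ProgressionConvexOn

theorem pi {ι : Type*} [Fintype ι] {E : ι → Type*} [∀ i, SeminormedAddCommGroup (E i)]
    {L : ∀ i, AddSubgroup (E i)} {B : ∀ i, Set (E i)} {f : ∀ i, E i → ℝ}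
    (h : ∀ i, ProgressionConvexOn (L i) (B i) (f i)) :
    ProgressionConvexOn (AddSubgroup.pi univ L) (univ.pi B) (fun x => ∑ i, f i (x i)) := by
  intro x hx y hy z hz hxyz
  have gain (i : ι) : ‖x i - z i‖ ^ 2 / 2 ≤ f i (x i) + f i (z i) - 2 * f i (y i) :=
    h i (hx i trivial) (hy i trivial) (hz i trivial) (hxyz i trivial)
  have gain_nonneg (i : ι) : 0 ≤ f i (x i) + f i (z i) - 2 * f i (y i) :=
    le_trans (by positivity) (gain i)
  rw [Finset.mul_sum, ← Finset.sum_add_distrib, ← Finset.sum_sub_distrib]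
  set G := ∑ i, (f i (x i) + f i (z i) - 2 * f i (y i))
  have gain_le_sum (i : ι) : f i (x i) + f i (z i) - 2 * f i (y i) ≤ G :=
    Finset.single_le_sum (f := fun i => f i (x i) + f i (z i) - 2 * f i (y i))
      (fun j _ => gain_nonneg j) (Finset.mem_univ i)
  have hG : 0 ≤ G := Finset.sum_nonneg fun i _ => gain_nonneg i
  have hnorm : ‖x - z‖ ≤ √(2 * G) :=
    (pi_norm_le_iff_of_nonneg (Real.sqrt_nonneg _)).2 fun i =>
      Real.le_sqrt_of_sq_le (by rw [Pi.sub_apply]; linarith [gain i, gain_le_sum i])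
  linarith [(Real.le_sqrt (norm_nonneg _) (by positivity)).1 hnorm]

theorem norm_sub_sq_lt {E : Type*} [SeminormedAddCommGroup E] {L : AddSubgroup E} {B : Set E}
    {f : E → ℝ} (h : ProgressionConvexOn L B f) {a w : ℝ} {x y z : E}
    (hx : x ∈ B ∩ f ⁻¹' Ico a (a + w)) (hy : y ∈ B ∩ f ⁻¹' Ico a (a + w))
    (hz : z ∈ B ∩ f ⁻¹' Ico a (a + w)) (hxyz : x + z - 2 • y ∈ L) :
    ‖x - z‖ ^ 2 < 4 * w := by
  have gain := h hx.1 hy.1 hz.1 hxyz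
  have hfx : f x < a + w := hx.2.2
  have hfy : a ≤ f y := hy.2.1
  have hfz : f z < a + w := hz.2.2
  linarith

end ProgressionConvexOn

theorem exists_le_measure_inter_preimage_Ico {α : Type*} [MeasurableSpace α] (μ : Measure α)
    {B : Set α} {f : α → ℝ} {H w : ℝ} (hH : 0 ≤ H) (hw : 0 < w) (hf : MapsTo f B (Icc 0 H)) :
    ∃ a : ℝ, ENNReal.ofReal (w / (H + w)) * μ B ≤ μ (B ∩ f ⁻¹' Ico a (a + w)) := by
  set N := ⌊H / w⌋₊ + 1
  have hcover : B ⊆ ⋃ j ∈ Finset.range N, B ∩ f ⁻¹' Ico (j * w) (j * w + w) := by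
    intro q hq
    have hnonneg : 0 ≤ f q / w := div_nonneg (hf hq).1 hw.le
    simp only [mem_iUnion, Finset.mem_range, exists_prop]
    refine ⟨⌊f q / w⌋₊, Nat.lt_succ_of_le (Nat.floor_le_floor ?_), hq, ?_, ?_⟩
    · gcongr
      exact (hf hq).2
    · exact (le_div_iff₀ hw).1 (Nat.floor_le hnonneg)
    · rw [← add_one_mul]
      exact (div_lt_iff₀ hw).1 (Nat.lt_floor_add_one (f q / w))
  have hN : N * (w / (H + w)) ≤ 1 := by
    have hNle : (N : ℝ) ≤ H / w + 1 := by
      push_cast [N]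
      gcongr
      exact Nat.floor_le (by positivity)
    calc N * (w / (H + w)) ≤ (H / w + 1) * (w / (H + w)) := by gcongr
      _ = 1 := by field_simp
  by_contra! hlt
  refine lt_irrefl (μ B) ?_
  calc μ B ≤ ∑ j ∈ Finset.range N, μ (B ∩ f ⁻¹' Ico (j * w) (j * w + w)) :=
        (measure_mono hcover).trans (measure_biUnion_finset_le _ _)
    _ < ∑ _j ∈ Finset.range N, ENNReal.ofReal (w / (H + w)) * μ B :=
        ENNReal.sum_lt_sum_of_nonempty (by simp [N]) fun j _ => hlt _
    _ = ENNReal.ofReal (N * (w / (H + w))) * μ B := by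
        rw [Finset.sum_const, Finset.card_range, nsmul_eq_mul, ← mul_assoc,
          ENNReal.ofReal_mul (Nat.cast_nonneg N), ENNReal.ofReal_natCast]
    _ ≤ μ B := mul_le_of_le_one_left' (ENNReal.ofReal_le_one.2 hN)

theorem ProgressionConvexOn.exists_subset {E : Type*} [SeminormedAddCommGroup E]
    [MeasurableSpace E] (μ : Measure E) {L : AddSubgroup E} {B : Set E} {f : E → ℝ} {H δ : ℝ}
    (h : ProgressionConvexOn L B f) (hB : MeasurableSet B) (hf : Measurable f) (hH : 0 ≤ H)
    (hfH : MapsTo f B (Icc 0 H)) (hδ : 0 < δ) :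
    ∃ S ⊆ B, MeasurableSet S ∧ ENNReal.ofReal (δ ^ 2 / (4 * H + δ ^ 2)) * μ B ≤ μ S ∧
      ∀ x ∈ S, ∀ y ∈ S, ∀ z ∈ S, x + z - 2 • y ∈ L → ‖x - z‖ < δ := by
  obtain ⟨a, ha⟩ :=
    exists_le_measure_inter_preimage_Ico μ hH (w := δ ^ 2 / 4) (by positivity) hfH
  refine ⟨B ∩ f ⁻¹' Ico a (a + δ ^ 2 / 4), inter_subset_left, hB.inter (hf measurableSet_Ico),
    ?_, ?_⟩
  · convert ha using 3
    field_simp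
  · intro x hx y hy z hz hxyz
    refine lt_of_pow_lt_pow_left₀ 2 hδ.le ?_
    linarith [h.norm_sub_sq_lt hx hy hz hxyz]

end ProgressionConvex

section Block

/-- The coordinate `r = 2 * v - u` of the point `(u, v)`. -/
def phase (q : ℝ × ℝ) : ℝ := 2 * q.2 - q.1

/-- The part of `block` in the left half of the unit square. The gap between `119 / 240` and `1 / 2`
separates it quantitatively from the other parts; its width makes the area of `block` exactly
`7 / 24`. -/
def lowPart : Set (ℝ × ℝ) :=
  {q | q.1 ∈ Ico 0 (119 / 240) ∧ phase q ∈ Ico 0 1 ∧ 3 ≤ 10 * q.1 + 4 * phase q}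

/-- The upper of the two copies making up the part of `block` in the right half of the unit square.
Translated by `(-1 / 2, -1 / 2)` in the `(u, r)` plane it lies on the other side of the line
`10 * u + 4 * r = 3` from `lowPart`. -/
def highPart : Set (ℝ × ℝ) :=
  {q | 1 / 2 ≤ q.1 ∧ phase q ∈ Ico (1 / 2) 1 ∧ 10 * q.1 + 4 * phase q < 10}

/-- The subset of the unit square, of area `7 / 24`, whose powers contain the sets constructed here:
`lowPart`, `highPart` and the copy of `highPart` lowered by `1 / 2`. -/
def block : Set (ℝ × ℝ) := lowPart ∪ highPart ∪ (· + (0, 1 / 2)) ⁻¹' highPart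

/-- The number of half units by which a point of `block` has to be raised to land in
`lowPart ∪ highPart`. -/
noncomputable def sheet (q : ℝ × ℝ) : ℤ := if phase q < 0 then 1 else 0

/-- The map moving the lower copy of `highPart` in `block` onto `highPart`, the identity on the rest
of `block`. -/
noncomputable def raise (q : ℝ × ℝ) : ℝ × ℝ := (q.1, q.2 + sheet q / 2)

/-- The convex penalty in the first coordinate: it vanishes on `lowPart` and is affine and at least
`1` on `highPart`. -/
noncomputable def level (u : ℝ) : ℝ := max 0 (480 * u - 239)

/-- The function on `block` that is uniformly convex along progressions modulo the integers. The
factor `5` lets a unit gain of `level` outweigh the squared lengths. -/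
noncomputable def height (q : ℝ × ℝ) : ℝ :=
  5 * level q.1 + ((raise q).1 ^ 2 + (raise q).2 ^ 2)

/-- The lattice `ℤ ^ 2` in the plane. -/
def planeLattice : AddSubgroup (ℝ × ℝ) := (Int.castAddHom ℝ).range.prod (Int.castAddHom ℝ).range

variable {q : ℝ × ℝ}

lemma mem_planeLattice : q ∈ planeLattice ↔ (∃ k : ℤ, q.1 = k) ∧ ∃ l : ℤ, q.2 = l := by
  simp only [planeLattice, AddSubgroup.mem_prod, AddMonoidHom.mem_range, Int.coe_castAddHom,
    eq_comm]

lemma phase_raise (q : ℝ × ℝ) : phase (raise q) = phase q + sheet q := by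
  simp only [phase, raise]
  ring

lemma sheet_eq_zero_or_one (q : ℝ × ℝ) : sheet q = 0 ∨ sheet q = 1 := by
  unfold sheet
  split_ifs <;> simp

lemma raise_eq_self (hq : 0 ≤ phase q) : raise q = q := by
  simp [raise, sheet, not_lt.2 hq]

lemma phase_neg_of_add_mem_highPart (hq : q + (0, 1 / 2) ∈ highPart) : phase q < 0 := by
  have hlt : phase (q + (0, 1 / 2)) < 1 := hq.2.1.2
  simp only [phase, Prod.fst_add, Prod.snd_add] at hlt ⊢
  linarith

lemma raise_mem_of_mem_block (hq : q ∈ block) :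
    raise q ∈ lowPart ∧ sheet q = 0 ∨ raise q ∈ highPart := by
  rcases hq with (hlow | hhigh) | hlower
  · have hphase : 0 ≤ phase q := hlow.2.1.1
    exact .inl ⟨by rwa [raise_eq_self hphase], if_neg hphase.not_gt⟩
  · have hphase : 0 ≤ phase q := by linarith [hhigh.2.1.1]
    exact .inr (by rwa [raise_eq_self hphase])
  · have hphase : phase q < 0 := phase_neg_of_add_mem_highPart hlower
    have hraise : raise q = q + (0, 1 / 2) := by ext <;> simp [raise, sheet, hphase]
    exact .inr (by rwa [hraise])

lemma raise_mem_lowPart (hq : q ∈ block) (hlt : q.1 < 1 / 2) :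
    raise q ∈ lowPart ∧ sheet q = 0 :=
  (raise_mem_of_mem_block hq).resolve_right fun h => hlt.not_ge h.1

lemma raise_mem_highPart (hq : q ∈ block) (hle : 1 / 2 ≤ q.1) : raise q ∈ highPart :=
  (raise_mem_of_mem_block hq).resolve_left fun h => by
    have : q.1 < 119 / 240 := h.1.1.2
    linarith

lemma fst_lt_of_lt_half (hq : q ∈ block) (hlt : q.1 < 1 / 2) : q.1 < 119 / 240 :=
  (raise_mem_lowPart hq hlt).1.1.2

lemma block_subset_unitSquare : block ⊆ Ico 0 1 ×ˢ Ico 0 1 := by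
  rintro q ((⟨⟨_, _⟩, ⟨_, _⟩, _⟩ | ⟨_, ⟨_, _⟩, _⟩) | ⟨_, ⟨_, _⟩, _⟩) <;>
    simp only [phase, Prod.fst_add, Prod.snd_add] at * <;>
    refine ⟨⟨?_, ?_⟩, ?_, ?_⟩ <;> linarith

lemma raise_mem_unitSquare (hq : q ∈ block) : raise q ∈ Ico (0 : ℝ) 1 ×ˢ Ico (0 : ℝ) 1 :=
  block_subset_unitSquare <| .inl <| (raise_mem_of_mem_block hq).imp And.left id

lemma sq_add_sq_raise_mem_Icc (hq : q ∈ block) :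
    (raise q).1 ^ 2 + (raise q).2 ^ 2 ∈ Icc (0 : ℝ) 2 := by
  obtain ⟨⟨hu0, hu1⟩, hv0, hv1⟩ := raise_mem_unitSquare hq
  refine ⟨by positivity, ?_⟩
  linarith [pow_le_one₀ hu0 hu1.le (n := 2), pow_le_one₀ hv0 hv1.le (n := 2)]

lemma height_mem_Icc (hq : q ∈ block) : height q ∈ Icc 0 1207 := by
  have hsq := sq_add_sq_raise_mem_Icc hq
  have hlevel : level q.1 ∈ Icc 0 241 :=
    ⟨le_max_left _ _, max_le (by norm_num) (by linarith [(block_subset_unitSquare hq).1.2])⟩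
  constructor <;> unfold height <;> linarith [hsq.1, hsq.2, hlevel.1, hlevel.2]

end Block

section Gain

variable {x y z : ℝ × ℝ}

lemma level_eq_zero {u : ℝ} (hu : u < 119 / 240) : level u = 0 :=
  max_eq_left (by linarith)

lemma level_of_half_le {u : ℝ} (hu : 1 / 2 ≤ u) : level u = 480 * u - 239 :=
  max_eq_right (by linarith)

lemma one_le_level_gain_of_lt {u v w : ℝ} (hv : v < 119 / 240) (h : 1 / 2 ≤ u ∨ 1 / 2 ≤ w) :
    1 ≤ level u + level w - 2 * level v := by
  have hu0 : 0 ≤ level u := le_max_left _ _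
  have hw0 : 0 ≤ level w := le_max_left _ _
  rw [level_eq_zero hv]
  rcases h with hu | hw
  · linarith [level_of_half_le hu]
  · linarith [level_of_half_le hw]

lemma one_le_level_gain_of_half_le {u v w : ℝ} (hv : 1 / 2 ≤ v) (hmid : u + w = 2 * v)
    (h : u < 119 / 240 ∨ w < 119 / 240) :
    1 ≤ level u + level w - 2 * level v := by
  have hu0 : 0 ≤ level u := le_max_left _ _
  have hw0 : 0 ≤ level w := le_max_left _ _
  have hu1 : 480 * u - 239 ≤ level u := le_max_right _ _
  have hw1 : 480 * w - 239 ≤ level w := le_max_right _ _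
  rw [level_of_half_le hv]
  rcases h with hu | hw <;> linarith

lemma eq_zero_of_cast_mem_Ioo {m : ℤ} (hm : (m : ℝ) ∈ Ioo (-1) 1) : m = 0 := by
  have hlower : -1 < m := by exact_mod_cast hm.1
  have hupper : m < 1 := by exact_mod_cast hm.2
  omega

lemma phase_raise_progression {k l : ℤ} (hk : x.1 + z.1 - 2 * y.1 = k)
    (hl : x.2 + z.2 - 2 * y.2 = l) :
    phase (raise x) + phase (raise z) - 2 * phase (raise y) =
      (2 * l - k + sheet x + sheet z - 2 * sheet y : ℤ) := by
  rw [phase_raise, phase_raise, phase_raise]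
  simp only [phase]
  push_cast
  linarith

lemma three_le_of_mem_block {q : ℝ × ℝ} (hq : q ∈ block) : 3 ≤ 10 * q.1 + 4 * phase (raise q) := by
  rcases raise_mem_of_mem_block hq with ⟨⟨-, -, h⟩, -⟩ | ⟨hu, ⟨hr, -⟩, -⟩
  · exact h
  · linarith [show 1 / 2 ≤ q.1 from hu]

lemma phase_raise_lt_one {q : ℝ × ℝ} (hq : q ∈ block) : phase (raise q) < 1 :=
  (raise_mem_of_mem_block hq).elim (fun h => h.1.2.1.2) (fun h => h.2.1.2)

/-- The line `10 * u + 4 * r = 3` forces the second difference of the raised phases, an integer, to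
vanish. If `x` and `z` are both low, that difference is odd; if one of them is high, then
`3 / 4 ≤ y.1`, and the slope of the line is chosen so that the difference is positive. -/
lemma fst_add_fst_sub_ne_neg_one (hx : x ∈ block) (hy : y ∈ block) (hz : z ∈ block) {l : ℤ}
    (hl : x.2 + z.2 - 2 * y.2 = l) : x.1 + z.1 - 2 * y.1 ≠ -1 := by
  intro hk
  have hx0 := (block_subset_unitSquare hx).1.1
  have hz0 := (block_subset_unitSquare hz).1.1
  obtain ⟨-, ⟨hYhalf, -⟩, hYline : 10 * y.1 + 4 * phase (raise y) < 10⟩ :=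
    raise_mem_highPart hy (by linarith)
  have hphase := phase_raise_progression (k := -1) (by exact_mod_cast hk) hl
  have hXline := three_le_of_mem_block hx
  have hZline := three_le_of_mem_block hz
  have hX1 := phase_raise_lt_one hx
  have hZ1 := phase_raise_lt_one hz
  have hzero : 2 * l - -1 + sheet x + sheet z - 2 * sheet y = 0 := by
    apply eq_zero_of_cast_mem_Ioo
    rw [← hphase]
    constructor <;> linarith
  rw [hzero, Int.cast_zero] at hphase
  rcases lt_or_ge x.1 (1 / 2) with hxlow | hxhigh <;>
    rcases lt_or_ge z.1 (1 / 2) with hzlow | hzhigh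
  · have := (raise_mem_lowPart hx hxlow).2
    have := (raise_mem_lowPart hz hzlow).2
    omega
  · linarith [(raise_mem_highPart hz hzhigh).2.1.1]
  · linarith [(raise_mem_highPart hx hxhigh).2.1.1]
  · linarith

lemma raise_progression_of_fst_lt (hx : x ∈ block) (hy : y ∈ block) (hz : z ∈ block)
    (hx' : x.1 < 1 / 2) (hy' : y.1 < 1 / 2) (hz' : z.1 < 1 / 2)
    (hk : x.1 + z.1 - 2 * y.1 = 0) {l : ℤ} (hl : x.2 + z.2 - 2 * y.2 = l) :
    phase (raise x) + phase (raise z) = 2 * phase (raise y) ∧ sheet x = sheet z := by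
  obtain ⟨⟨-, ⟨hX0, hX1⟩, -⟩, hsx⟩ := raise_mem_lowPart hx hx'
  obtain ⟨⟨-, ⟨hY0, hY1⟩, -⟩, hsy⟩ := raise_mem_lowPart hy hy'
  obtain ⟨⟨-, ⟨hZ0, hZ1⟩, -⟩, hsz⟩ := raise_mem_lowPart hz hz'
  have hphase := phase_raise_progression (k := 0) (by exact_mod_cast hk) hl
  rw [hsx, hsy, hsz] at hphase
  push_cast at hphase
  have hl0 : l = 0 := eq_zero_of_cast_mem_Ioo ⟨by linarith, by linarith⟩
  rw [hl0, Int.cast_zero] at hphase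
  exact ⟨by linarith, hsx.trans hsz.symm⟩

lemma raise_progression_of_half_le_fst (hx : x ∈ block) (hy : y ∈ block) (hz : z ∈ block)
    (hx' : 1 / 2 ≤ x.1) (hy' : 1 / 2 ≤ y.1) (hz' : 1 / 2 ≤ z.1)
    (hk : x.1 + z.1 - 2 * y.1 = 0) {l : ℤ} (hl : x.2 + z.2 - 2 * y.2 = l) :
    phase (raise x) + phase (raise z) = 2 * phase (raise y) ∧ sheet x = sheet z := by
  obtain ⟨-, ⟨hX0, hX1⟩, -⟩ := raise_mem_highPart hx hx'
  obtain ⟨-, ⟨hY0, hY1⟩, -⟩ := raise_mem_highPart hy hy'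
  obtain ⟨-, ⟨hZ0, hZ1⟩, -⟩ := raise_mem_highPart hz hz'
  have hphase := phase_raise_progression (k := 0) (by exact_mod_cast hk) hl
  have hzero : 2 * l - 0 + sheet x + sheet z - 2 * sheet y = 0 := by
    apply eq_zero_of_cast_mem_Ioo
    rw [← hphase]
    constructor <;> linarith
  rw [hzero, Int.cast_zero] at hphase
  refine ⟨by linarith, ?_⟩
  rcases sheet_eq_zero_or_one x with hsx | hsx <;>
    rcases sheet_eq_zero_or_one z with hsz | hsz <;> omega

lemma norm_sq_le_sq_add_sq (p : ℝ × ℝ) : ‖p‖ ^ 2 ≤ p.1 ^ 2 + p.2 ^ 2 := by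
  rw [Prod.norm_def]
  rcases max_choice ‖p.1‖ ‖p.2‖ with h | h <;> rw [h, Real.norm_eq_abs, sq_abs]
  · exact le_add_of_nonneg_right (sq_nonneg _)
  · exact le_add_of_nonneg_left (sq_nonneg _)

lemma height_gain_of_raise_progression (hk : x.1 + z.1 - 2 * y.1 = 0)
    (hlevel : level x.1 + level z.1 = 2 * level y.1)
    (h : phase (raise x) + phase (raise z) = 2 * phase (raise y) ∧ sheet x = sheet z) :
    ‖x - z‖ ^ 2 / 2 ≤ height x + height z - 2 * height y := by
  obtain ⟨hphase, hsheet⟩ := h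
  have hsnd : (raise x).2 + (raise z).2 = 2 * (raise y).2 := by
    simp only [phase, raise] at hphase ⊢
    linarith
  have hsnd_sub : (raise x).2 - (raise z).2 = x.2 - z.2 := by simp [raise, hsheet]
  have parallelogram {a b c : ℝ} (habc : a + c = 2 * b) :
      (a - c) ^ 2 = 2 * (a ^ 2 + c ^ 2 - 2 * b ^ 2) := by
    linear_combination (-(a + c) - 2 * b) * habc
  have hnorm := norm_sq_le_sq_add_sq (x - z)
  rw [Prod.fst_sub, Prod.snd_sub, ← hsnd_sub, parallelogram hsnd,
    parallelogram (sub_eq_zero.1 hk)] at hnorm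
  simp only [height, raise] at hnorm ⊢
  linarith

lemma height_gain_of_one_le_level_gain (hx : x ∈ block) (hy : y ∈ block) (hz : z ∈ block)
    (hlevel : 1 ≤ level x.1 + level z.1 - 2 * level y.1) :
    ‖x - z‖ ^ 2 / 2 ≤ height x + height z - 2 * height y := by
  obtain ⟨hx1, hx2⟩ := block_subset_unitSquare hx
  obtain ⟨hz1, hz2⟩ := block_subset_unitSquare hz
  have hnorm : ‖x - z‖ ≤ 1 := max_le
    (Real.dist_le_of_mem_Icc_01 (Ico_subset_Icc_self hx1) (Ico_subset_Icc_self hz1))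
    (Real.dist_le_of_mem_Icc_01 (Ico_subset_Icc_self hx2) (Ico_subset_Icc_self hz2))
  have hnorm_sq : ‖x - z‖ ^ 2 ≤ 1 := pow_le_one₀ (norm_nonneg _) hnorm
  unfold height
  linarith [(sq_add_sq_raise_mem_Icc hx).1, (sq_add_sq_raise_mem_Icc hy).2,
    (sq_add_sq_raise_mem_Icc hz).1]

lemma height_gain_of_fst_eq (hx : x ∈ block) (hy : y ∈ block) (hz : z ∈ block)
    (hk : x.1 + z.1 - 2 * y.1 = 0) {l : ℤ} (hl : x.2 + z.2 - 2 * y.2 = l) :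
    ‖x - z‖ ^ 2 / 2 ≤ height x + height z - 2 * height y := by
  rcases lt_or_ge y.1 (1 / 2) with hy' | hy'
  · by_cases hhigh : 1 / 2 ≤ x.1 ∨ 1 / 2 ≤ z.1
    · exact height_gain_of_one_le_level_gain hx hy hz
        (one_le_level_gain_of_lt (fst_lt_of_lt_half hy hy') hhigh)
    · obtain ⟨hx', hz'⟩ := by simpa only [not_or, not_le] using hhigh
      refine height_gain_of_raise_progression hk ?_
        (raise_progression_of_fst_lt hx hy hz hx' hy' hz' hk hl)
      rw [level_eq_zero (fst_lt_of_lt_half hx hx'), level_eq_zero (fst_lt_of_lt_half hy hy'),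
        level_eq_zero (fst_lt_of_lt_half hz hz')]
      norm_num
  · by_cases hlow : x.1 < 1 / 2 ∨ z.1 < 1 / 2
    · exact height_gain_of_one_le_level_gain hx hy hz
        (one_le_level_gain_of_half_le hy' (sub_eq_zero.1 hk)
          (hlow.imp (fst_lt_of_lt_half hx) (fst_lt_of_lt_half hz)))
    · obtain ⟨hx', hz'⟩ := by simpa only [not_or, not_lt] using hlow
      refine height_gain_of_raise_progression hk ?_
        (raise_progression_of_half_le_fst hx hy hz hx' hy' hz' hk hl)
      rw [level_of_half_le hx', level_of_half_le hy', level_of_half_le hz']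
      linarith

lemma height_gain_of_fst_eq_add_one (hx : x ∈ block) (hy : y ∈ block) (hz : z ∈ block)
    (hk : x.1 + z.1 - 2 * y.1 = 1) :
    ‖x - z‖ ^ 2 / 2 ≤ height x + height z - 2 * height y := by
  have hx1 := (block_subset_unitSquare hx).1.2
  have hy0 := (block_subset_unitSquare hy).1.1
  have hz1 := (block_subset_unitSquare hz).1.2
  refine height_gain_of_one_le_level_gain hx hy hz
    (one_le_level_gain_of_lt (fst_lt_of_lt_half hy (by linarith)) ?_)
  by_contra! hlow
  linarith

theorem progressionConvexOn_height : ProgressionConvexOn planeLattice block height := by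
  intro x hx y hy z hz hxyz
  obtain ⟨⟨k, hk⟩, l, hl⟩ := mem_planeLattice.1 hxyz
  replace hk : x.1 + z.1 - 2 * y.1 = k := by simpa using hk
  replace hl : x.2 + z.2 - 2 * y.2 = l := by simpa using hl
  have hk_range : -2 < k ∧ k < 2 := by
    obtain ⟨hx0, hx1⟩ := (block_subset_unitSquare hx).1
    obtain ⟨hy0, hy1⟩ := (block_subset_unitSquare hy).1
    obtain ⟨hz0, hz1⟩ := (block_subset_unitSquare hz).1
    constructor <;> rify <;> linarith
  obtain rfl | rfl | rfl : k = -1 ∨ k = 0 ∨ k = 1 := by omega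
  · exact absurd (by exact_mod_cast hk) (fst_add_fst_sub_ne_neg_one hx hy hz hl)
  · exact height_gain_of_fst_eq hx hy hz (by exact_mod_cast hk) hl
  · exact height_gain_of_fst_eq_add_one hx hy hz (by exact_mod_cast hk)

end Gain

section Measure

lemma measurable_phase : Measurable phase := by
  unfold phase
  fun_prop

lemma measurable_sheet : Measurable sheet :=
  .ite (measurableSet_lt measurable_phase measurable_const) measurable_const measurable_const

lemma measurable_height : Measurable height := by
  have hsheet : Measurable fun q => (sheet q : ℝ) := measurable_from_top.comp measurable_sheet
  unfold height level raise
  fun_prop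

lemma measurableSet_lowPart : MeasurableSet lowPart :=
  (measurable_fst measurableSet_Ico).inter <| (measurable_phase measurableSet_Ico).inter <|
    measurableSet_le measurable_const
      ((measurable_fst.const_mul 10).add (measurable_phase.const_mul 4))

lemma measurableSet_highPart : MeasurableSet highPart :=
  (measurable_fst measurableSet_Ici).inter <| (measurable_phase measurableSet_Ico).inter <|
    measurableSet_lt ((measurable_fst.const_mul 10).add (measurable_phase.const_mul 4))
      measurable_const

lemma measurableSet_block : MeasurableSet block :=
  (measurableSet_lowPart.union measurableSet_highPart).union
    (measurable_add_const _ measurableSet_highPart)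

/-- The open trapezoid over the interval `(a, b)` between the lines `v = c + c' * u` and
`v = d + d' * u`. -/
def trapezoid (a b c c' d d' : ℝ) : Set (ℝ × ℝ) :=
  regionBetween (fun u => c + c' * u) (fun u => d + d' * u) (Ioo a b)

lemma measurableSet_trapezoid (a b c c' d d' : ℝ) : MeasurableSet (trapezoid a b c c' d d') :=
  measurableSet_regionBetween (by fun_prop) (by fun_prop) measurableSet_Ioo

lemma volume_trapezoid {a b c c' d d' : ℝ} (hab : a ≤ b)
    (h : ∀ u ∈ Ioo a b, c + c' * u ≤ d + d' * u) :
    volume (trapezoid a b c c' d d') =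
      ENNReal.ofReal ((b - a) * (d - c + (d' - c') * (a + b) / 2)) := by
  have hintegrable (s t : ℝ) : IntegrableOn (fun u : ℝ => s + t * u) (Ioo a b) :=
    (by fun_prop : Continuous fun u : ℝ => s + t * u).integrableOn_Icc.mono_set
      Ioo_subset_Icc_self
  have hlength (u : ℝ) :
      ((fun u => d + d' * u) - fun u => c + c' * u) u = (d - c) + (d' - c') * u := by
    simp only [Pi.sub_apply]
    ring
  rw [trapezoid, Measure.volume_eq_prod,
    volume_regionBetween_eq_integral (hintegrable _ _) (hintegrable _ _) measurableSet_Ioo h,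
    ← integral_Ioc_eq_integral_Ioo, ← intervalIntegral.integral_of_le hab]
  simp_rw [hlength]
  rw [intervalIntegral.integral_add (by simp) (by apply Continuous.intervalIntegrable; fun_prop),
    intervalIntegral.integral_const, intervalIntegral.integral_const_mul, integral_id, smul_eq_mul]
  congr 1
  ring

lemma disjoint_trapezoid {a b a' b' : ℝ} (hba' : b ≤ a') (c c' d d' e e' f f' : ℝ) :
    Disjoint (trapezoid a b c c' d d') (trapezoid a' b' e e' f f') :=
  disjoint_left.2 fun _ h h' => (h.1.2.trans_le hba').not_gt h'.1.1

lemma le_volume_lowPart : ENNReal.ofReal (23 / 120) ≤ volume lowPart := by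
  have hsub : trapezoid 0 (3 / 10) (3 / 8) (-3 / 4) (1 / 2) (1 / 2) ∪
      trapezoid (3 / 10) (119 / 240) 0 (1 / 2) (1 / 2) (1 / 2) ⊆ lowPart := by
    rintro q (⟨⟨_, _⟩, _, _⟩ | ⟨⟨_, _⟩, _, _⟩) <;>
      refine ⟨⟨?_, ?_⟩, ⟨?_, ?_⟩, ?_⟩ <;> (try unfold phase) <;> linarith
  refine le_trans (le_of_eq ?_) (measure_mono hsub)
  rw [measure_union (disjoint_trapezoid le_rfl ..) (measurableSet_trapezoid ..),
    volume_trapezoid (by norm_num) fun u hu => by linarith [hu.1, hu.2],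
    volume_trapezoid (by norm_num) fun u _ => by linarith,
    ← ENNReal.ofReal_add (by norm_num) (by norm_num)]
  norm_num

lemma le_volume_highPart : ENNReal.ofReal (1 / 20) ≤ volume highPart := by
  have hsub : trapezoid (1 / 2) (3 / 5) (1 / 4) (1 / 2) (1 / 2) (1 / 2) ∪
      trapezoid (3 / 5) (4 / 5) (1 / 4) (1 / 2) (5 / 4) (-3 / 4) ⊆ highPart := by
    rintro q (⟨⟨_, _⟩, _, _⟩ | ⟨⟨_, _⟩, _, _⟩) <;>
      refine ⟨?_, ⟨?_, ?_⟩, ?_⟩ <;> (try unfold phase) <;> linarith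
  refine le_trans (le_of_eq ?_) (measure_mono hsub)
  rw [measure_union (disjoint_trapezoid le_rfl ..) (measurableSet_trapezoid ..),
    volume_trapezoid (by norm_num) fun u _ => by linarith,
    volume_trapezoid (by norm_num) fun u hu => by linarith [hu.2],
    ← ENNReal.ofReal_add (by norm_num) (by norm_num)]
  norm_num

lemma disjoint_lowPart_highPart : Disjoint lowPart highPart :=
  disjoint_left.2 fun q hlow hhigh => by linarith [hlow.1.2, show 1 / 2 ≤ q.1 from hhigh.1]

lemma disjoint_lowPart_union_highPart_lowered :
    Disjoint (lowPart ∪ highPart) ((· + (0, 1 / 2)) ⁻¹' highPart) := by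
  refine disjoint_left.2 fun q hq hlower => ?_
  have hneg : phase q < 0 := phase_neg_of_add_mem_highPart hlower
  rcases hq with hlow | hhigh
  · linarith [hlow.2.1.1]
  · linarith [hhigh.2.1.1]

lemma le_volume_block : ENNReal.ofReal (7 / 24) ≤ volume block := by
  have hlowered : MeasurableSet ((· + ((0, 1 / 2) : ℝ × ℝ)) ⁻¹' highPart) :=
    measurable_add_const _ measurableSet_highPart
  calc ENNReal.ofReal (7 / 24)
      = ENNReal.ofReal (23 / 120) + ENNReal.ofReal (1 / 20) + ENNReal.ofReal (1 / 20) := by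
        rw [← ENNReal.ofReal_add, ← ENNReal.ofReal_add] <;> norm_num
    _ ≤ volume lowPart + volume highPart + volume highPart := by
        gcongr
        exacts [le_volume_lowPart, le_volume_highPart, le_volume_highPart]
    _ = volume block := by
        rw [block, measure_union disjoint_lowPart_union_highPart_lowered hlowered,
          measure_union disjoint_lowPart_highPart measurableSet_highPart,
          measure_preimage_add_right]

end Measure

section Product

lemma exists_subset_pi_block (κ : Type*) [Fintype κ] {δ : ℝ} (hδ : 0 < δ) :
    ∃ T ⊆ univ.pi fun _ : κ => block, MeasurableSet T ∧
      ENNReal.ofReal (δ ^ 2 / (4 * (1207 * Fintype.card κ) + δ ^ 2) * (7 / 24) ^ Fintype.card κ) ≤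
        volume T ∧
      ∀ x ∈ T, ∀ y ∈ T, ∀ z ∈ T,
        (∀ i, x i + z i - 2 • y i ∈ planeLattice) → ‖x - z‖ < δ := by
  have hsum : MapsTo (fun q : κ → ℝ × ℝ => ∑ i, height (q i)) (univ.pi fun _ => block)
      (Icc 0 (1207 * Fintype.card κ)) := fun q hq => by
    refine ⟨Finset.sum_nonneg fun i _ => (height_mem_Icc (hq i trivial)).1, ?_⟩
    simpa [mul_comm] using
      Finset.sum_le_sum fun i (_ : i ∈ Finset.univ) => (height_mem_Icc (hq i trivial)).2
  obtain ⟨T, hTB, hT, hvol, hprog⟩ :=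
    (ProgressionConvexOn.pi fun _ : κ => progressionConvexOn_height).exists_subset volume
      (.univ_pi fun _ => measurableSet_block)
      (Finset.measurable_sum _ fun i _ => measurable_height.comp (measurable_pi_apply i))
      (by positivity) hsum hδ
  refine ⟨T, hTB, hT, le_trans ?_ hvol, fun x hx y hy z hz h => hprog x hx y hy z hz fun i _ => h i⟩
  rw [ENNReal.ofReal_mul (by positivity), ENNReal.ofReal_pow (by norm_num), volume_pi_pi,
    Finset.prod_const, Finset.card_univ, ← mul_assoc]
  gcongr
  exact le_volume_block

/-- The identification of `ℝ ^ ι` with `(ℝ ^ 2) ^ κ` obtained by arranging the coordinates in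
pairs. -/
def pairing {ι κ α : Type*} (e : κ ⊕ κ ≃ ι) (x : ι → α) (i : κ) : α × α :=
  (x (e (.inl i)), x (e (.inr i)))

lemma measurePreserving_pairing {ι κ : Type*} [Fintype ι] [Fintype κ] (e : κ ⊕ κ ≃ ι) :
    MeasurePreserving (pairing (α := ℝ) e) :=
  (volume_measurePreserving_arrowProdEquivProdArrow ℝ ℝ κ).symm.comp <|
    (volume_measurePreserving_sumPiEquivProdPi fun _ : κ ⊕ κ => ℝ).comp
      (volume_measurePreserving_piCongrLeft (fun _ : ι => ℝ) e).symm

lemma abs_sub_le_norm_pairing_sub {ι κ : Type*} [Fintype κ] (e : κ ⊕ κ ≃ ι) (x z : ι → ℝ)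
    (i : ι) : |x i - z i| ≤ ‖pairing e x - pairing e z‖ := by
  obtain ⟨j | j, rfl⟩ := e.surjective i
  · exact (le_max_left _ _).trans (norm_le_pi_norm (pairing e x - pairing e z) j)
  · exact (le_max_right _ _).trans (norm_le_pi_norm (pairing e x - pairing e z) j)

lemma density_bound {δ t : ℝ} (hδ : 0 < δ) (hδ1 : δ ≤ 1) (ht : 1 ≤ t) :
    (10 : ℝ)⁻¹ ^ 5 * δ ^ 2 * ((t + t) ^ 3)⁻¹ ≤ δ ^ 2 / (4 * (1207 * t) + δ ^ 2) := by
  have hδsq : δ ^ 2 ≤ 1 := pow_le_one₀ hδ.le hδ1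
  have hcube : t ≤ t ^ 3 := le_self_pow₀ ht three_ne_zero
  calc (10 : ℝ)⁻¹ ^ 5 * δ ^ 2 * ((t + t) ^ 3)⁻¹ = δ ^ 2 / (10 ^ 5 * (t + t) ^ 3) := by
        field_simp
    _ ≤ δ ^ 2 / (4 * (1207 * t) + δ ^ 2) := by
        gcongr
        linarith [show (t + t) ^ 3 = 8 * t ^ 3 by ring]

end Product

theorem stmt_18 (δ : ℝ) (hδ : 0 < δ) (hδ1 : δ < 1) (n : ℕ) (hn : 0 < n) (hne : Even n) :
    ∃ S : Set (Fin n → ℝ),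
      S ⊆ univ.pi (fun _ => Ico (0:ℝ) 1) ∧ MeasurableSet S ∧
      ENNReal.ofReal ((10:ℝ)⁻¹^5 * δ^2 * ((n:ℝ)^3)⁻¹ * (7/24:ℝ)^(n/2)) ≤ volume S ∧
      ∀ x ∈ S, ∀ y ∈ S, ∀ z ∈ S,
        (∀ i, ∃ k : ℤ, x i + z i - 2 * y i = k) → ∀ i, |x i - z i| < δ := by
  obtain ⟨m, rfl⟩ := hne
  let e : Fin m ⊕ Fin m ≃ Fin (m + m) := finSumFinEquiv
  obtain ⟨T, hTB, hT, hvol, hprog⟩ := exists_subset_pi_block (Fin m) hδ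
  refine ⟨pairing e ⁻¹' T, fun x hx i _ => ?_, (measurePreserving_pairing e).measurable hT, ?_, ?_⟩
  · have hsq (j : Fin m) := block_subset_unitSquare (hTB hx j trivial)
    obtain ⟨j | j, rfl⟩ := e.surjective i
    exacts [(hsq j).1, (hsq j).2]
  · rw [(measurePreserving_pairing e).measure_preimage hT.nullMeasurableSet]
    refine le_trans (ENNReal.ofReal_le_ofReal ?_) hvol
    have hhalf : (m + m) / 2 = m := by omega
    rw [hhalf, Fintype.card_fin]
    gcongr
    push_cast
    exact density_bound hδ hδ1.le (by exact_mod_cast (show 1 ≤ m by omega))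
  · intro x hx y hy z hz h i
    refine (abs_sub_le_norm_pairing_sub e x z i).trans_lt
      (hprog _ hx _ hy _ hz fun j => mem_planeLattice.2 ⟨?_, ?_⟩)
    · simpa [pairing] using h (e (.inl j))
    · simpa [pairing] using h (e (.inr j))
end

section
/- Let n be a positive integer and m₁, …, mₙ integers with 2 ≤ mᵢ ≤ m for all i. Then r₃(ℤ_{m₁} × ⋯ × ℤ_{mₙ}) ≥ (7/24)^(n/2) / (10⁶ m² n³) · m₁⋯mₙ, where r₃(G) is the maximum size of a subset of the finite abelian group G containing no three distinct elements x, y, z with x + z = 2y. -/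
/-- The maximum size of a subset of an abelian group containing no three
distinct elements `x, y, z` with `x + z = y + y`. -/
noncomputable def r3 (G : Type*) [AddCommGroup G] : ℕ :=
  sSup {n : ℕ | ∃ A : Finset G,
    (∀ x ∈ A, ∀ y ∈ A, ∀ z ∈ A, x ≠ y → y ≠ z → x ≠ z → x + z ≠ y + y) ∧ A.card = n}

/-!
On the half circle `(0, 1 / 2]` a progression modulo `1` is a progression in `ℝ`, so along it the
second difference of `x ^ 2` is half the square of the gap. Copies of `ZMod m` in the circle have
gaps at least `1 / m`, and averaging over translates puts half of `ZMod m` in the half circle. A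
product of such sets, cut down to a level set of the total weight up to an error smaller than the
gap, has no progressions, but costs a factor `1 / 2` per coordinate.

For two coordinates at a time there is a region of the torus of area almost `7 / 24 > 1 / 4` which
does as well, although progressions in it may wrap around. It consists of points over the left half
circle, and of points over `(1 / 2, 3 / 4]` whose second coordinate is only used modulo `1 / 2`.
A strip of width `ε` separating the two parts makes the first coordinate dominate whenever a
progression meets both. Taking `ε = 1 / (6 * n)` loses only a bounded factor in the `n / 2`-th
power of the density.
-/

open Set MeasureTheory
open scoped Finset

section Midconvex

variable {G H : Type*} [AddCommGroup G] [AddCommGroup H]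

/-- Midpoint convexity with modulus `d` on a subset of an abelian group: the second difference of
`f` along each progression `x, y, z` in `s` is at least `d (x - z)`. The degenerate progressions
`x + x = y + y` are included. -/
def MidconvexOn (s : Set G) (d f : G → ℝ) : Prop :=
  ∀ ⦃x⦄, x ∈ s → ∀ ⦃y⦄, y ∈ s → ∀ ⦃z⦄, z ∈ s → x + z = y + y → d (x - z) ≤ f x + f z - 2 * f y

lemma MidconvexOn.mono_modulus {s : Set G} {d d' f : G → ℝ} (h : MidconvexOn s d f)
    (hd : ∀ u, d' u ≤ d u) : MidconvexOn s d' f :=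
  fun _ hx _ hy _ hz hxyz => (hd _).trans (h hx hy hz hxyz)

lemma MidconvexOn.preimage_add_right {s : Set G} {d f : G → ℝ} (h : MidconvexOn s d f) (θ : G) :
    MidconvexOn ((· + θ) ⁻¹' s) d fun x => f (x + θ) := by
  intro x hx y hy z hz hxyz
  have := h hx hy hz (by rw [add_add_add_comm, hxyz, add_add_add_comm])
  rwa [add_sub_add_right_eq_sub] at this

lemma MidconvexOn.comp_addMonoidHom {s : Set H} {d f : H → ℝ} (h : MidconvexOn s d f)
    (φ : G →+ H) : MidconvexOn (φ ⁻¹' s) (d ∘ φ) (f ∘ φ) := by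
  intro x hx y hy z hz hxyz
  have := h hx hy hz (by simp only [← map_add, hxyz])
  rwa [← map_sub] at this

lemma MidconvexOn.prod {s : Set G} {t : Set H} {d f : G → ℝ} {d' f' : H → ℝ}
    (hs : MidconvexOn s d f) (ht : MidconvexOn t d' f') :
    MidconvexOn (s ×ˢ t) (fun p => d p.1 + d' p.2) fun p => f p.1 + f' p.2 := by
  intro x hx y hy z hz hxyz
  have hfst := hs hx.1 hy.1 hz.1 (congrArg Prod.fst hxyz)
  have hsnd := ht hx.2 hy.2 hz.2 (congrArg Prod.snd hxyz)
  simp only [Prod.fst_sub, Prod.snd_sub]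
  linarith

/-- The modulus equal to `g` away from `0` and to `0` at `0`. -/
noncomputable def gapModulus (G : Type*) [AddCommGroup G] (g : ℝ) : G → ℝ :=
  indicator {0}ᶜ fun _ => g

lemma gapModulus_zero (g : ℝ) : gapModulus G g 0 = 0 := indicator_of_notMem (by simp) _

lemma gapModulus_of_ne_zero (g : ℝ) {u : G} (hu : u ≠ 0) : gapModulus G g u = g :=
  indicator_of_mem hu _

lemma gapModulus_nonneg {g : ℝ} (hg : 0 ≤ g) (u : G) : 0 ≤ gapModulus G g u :=
  indicator_nonneg (fun _ _ => hg) u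

lemma gapModulus_prod_le {g : ℝ} (hg : 0 ≤ g) (u : G × H) :
    gapModulus (G × H) g u ≤ gapModulus G g u.1 + gapModulus H g u.2 := by
  have h₁ := gapModulus_nonneg hg u.1
  have h₂ := gapModulus_nonneg hg u.2
  by_cases hfst : u.1 = 0
  · by_cases hsnd : u.2 = 0
    · rw [show u = 0 from Prod.ext hfst hsnd, gapModulus_zero]
      exact add_nonneg (gapModulus_nonneg hg _) (gapModulus_nonneg hg _)
    · rw [gapModulus_of_ne_zero g fun h => hsnd (congrArg Prod.snd h), gapModulus_of_ne_zero g hsnd]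
      linarith
  · rw [gapModulus_of_ne_zero g fun h => hfst (congrArg Prod.fst h), gapModulus_of_ne_zero g hfst]
    linarith

/-- `G` has a subset of at least `N` elements and a weight on it with values in `[0, B]` whose
second differences along progressions with distinct end points are at least `g`. The size `N` is a
real number, being obtained by averaging. -/
def HasMidconvexSet (G : Type*) [AddCommGroup G] (B g N : ℝ) : Prop :=
  ∃ (S : Finset G) (f : G → ℝ),
    (∀ x ∈ S, f x ∈ Icc 0 B) ∧ MidconvexOn (S : Set G) (gapModulus G g) f ∧ N ≤ #S

lemma hasMidconvexSet_of_subsingleton [Subsingleton G] (g : ℝ) : HasMidconvexSet G 0 g 1 := by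
  refine ⟨{0}, 0, by simp, fun x _ y _ z _ _ => ?_, by simp⟩
  simp [Subsingleton.elim (x - z) 0, gapModulus_zero]

lemma HasMidconvexSet.mono {B B' g N N' : ℝ} (h : HasMidconvexSet G B g N) (hB : B ≤ B')
    (hN : N' ≤ N) : HasMidconvexSet G B' g N' := by
  obtain ⟨S, f, hf, hconv, hS⟩ := h
  exact ⟨S, f, fun x hx => Icc_subset_Icc_right hB (hf x hx), hconv, hN.trans hS⟩

lemma HasMidconvexSet.prod {B B' g N N' : ℝ} (hg : 0 ≤ g) (hN : 0 ≤ N)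
    (hG : HasMidconvexSet G B g N) (hH : HasMidconvexSet H B' g N') :
    HasMidconvexSet (G × H) (B + B') g (N * N') := by
  obtain ⟨S, f, hf, hconv, hS⟩ := hG
  obtain ⟨T, f', hf', hconv', hT⟩ := hH
  refine ⟨S ×ˢ T, fun p => f p.1 + f' p.2, fun p hp => ?_, ?_, ?_⟩
  · obtain ⟨hfst, hsnd⟩ := Finset.mem_product.1 hp
    exact ⟨add_nonneg (hf _ hfst).1 (hf' _ hsnd).1, add_le_add (hf _ hfst).2 (hf' _ hsnd).2⟩
  · rw [Finset.coe_product]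
    exact (hconv.prod hconv').mono_modulus (gapModulus_prod_le hg)
  · rw [Finset.card_product, Nat.cast_mul]
    exact (mul_le_mul_of_nonneg_left hT hN).trans
      (mul_le_mul_of_nonneg_right hS (Nat.cast_nonneg _))

lemma HasMidconvexSet.congr {B g N : ℝ} (h : HasMidconvexSet G B g N) (e : G ≃+ H) :
    HasMidconvexSet H B g N := by
  obtain ⟨S, f, hf, hconv, hS⟩ := h
  refine ⟨S.map e.toEquiv.toEmbedding, f ∘ e.symm, fun x hx => hf _ ?_, ?_, by simpa using hS⟩
  · obtain ⟨a, ha, rfl⟩ := Finset.mem_map.1 hx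
    simpa using ha
  · have hpre : ((S.map e.toEquiv.toEmbedding : Finset H) : Set H) = e.symm ⁻¹' S := by
      rw [Finset.coe_map]
      exact e.toEquiv.image_eq_preimage_symm _
    rw [hpre]
    refine (hconv.comp_addMonoidHom e.symm.toAddMonoidHom).mono_modulus fun u => ?_
    rcases eq_or_ne u 0 with rfl | hu
    · simp [gapModulus_zero]
    · have hu' : e.symm u ≠ 0 := by simpa using hu
      exact (gapModulus_of_ne_zero g hu).le.trans_eq (gapModulus_of_ne_zero g hu').symm

lemma exists_subset_abs_sub_lt {α : Type*} (S : Finset α) (f : α → ℝ) {B δ : ℝ} (hB : 0 ≤ B)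
    (hδ : 0 < δ) (hf : ∀ x ∈ S, f x ∈ Icc 0 B) :
    ∃ T ⊆ S, (∀ x ∈ T, ∀ y ∈ T, |f x - f y| < δ) ∧ #S ≤ (B / δ + 1) * #T := by
  classical
  have hmaps : ∀ x ∈ S, ⌊f x / δ⌋₊ ∈ Finset.range (⌊B / δ⌋₊ + 1) := fun x hx =>
    Finset.mem_range_succ_iff.2 <| Nat.floor_le_floor <| by gcongr; exact (hf x hx).2
  have hlevels : ((⌊B / δ⌋₊ + 1 : ℕ) : ℝ) ≤ B / δ + 1 := by
    push_cast
    gcongr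
    exact Nat.floor_le (by positivity)
  obtain ⟨k, -, hk⟩ := Finset.exists_le_card_fiber_of_nsmul_le_card_of_maps_to
    (b := (#S : ℝ) / (B / δ + 1)) hmaps (by simp) (by
      rw [Finset.card_range, nsmul_eq_mul, mul_div_assoc', div_le_iff₀ (by positivity), mul_comm]
      gcongr)
  refine ⟨S.filter fun x => ⌊f x / δ⌋₊ = k, Finset.filter_subset _ _, fun x hx y hy => ?_, ?_⟩
  · obtain ⟨hxS, hx⟩ := Finset.mem_filter.1 hx
    obtain ⟨hyS, hy⟩ := Finset.mem_filter.1 hy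
    have hfloor : ⌊f x / δ⌋ = ⌊f y / δ⌋ := by
      rw [← Int.natCast_floor_eq_floor (div_nonneg (hf x hxS).1 hδ.le),
        ← Int.natCast_floor_eq_floor (div_nonneg (hf y hyS).1 hδ.le), hx, hy]
    have := Int.abs_sub_lt_one_of_floor_eq_floor hfloor
    rwa [← sub_div, abs_div, abs_of_pos hδ, div_lt_one hδ] at this
  · rwa [div_le_iff₀' (by positivity)] at hk

lemma card_le_r3 [Finite G] {A : Finset G}
    (hA : ∀ x ∈ A, ∀ y ∈ A, ∀ z ∈ A, x ≠ y → y ≠ z → x ≠ z → x + z ≠ y + y) : #A ≤ r3 G := by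
  have := Fintype.ofFinite G
  refine le_csSup ⟨Fintype.card G, ?_⟩ ⟨A, hA, rfl⟩
  rintro _ ⟨A', -, rfl⟩
  exact A'.card_le_univ

-- On a subset where `f` varies by less than `g / 2`, all second differences are less than `g`.
lemma HasMidconvexSet.le_mul_r3 [Finite G] {B g N : ℝ} (hB : 0 ≤ B) (hg : 0 < g)
    (h : HasMidconvexSet G B g N) : N ≤ (B / (g / 2) + 1) * r3 G := by
  obtain ⟨S, f, hf, hconv, hS⟩ := h
  obtain ⟨T, hTS, hosc, hcard⟩ := exists_subset_abs_sub_lt S f hB (half_pos hg) hf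
  have hT : #T ≤ r3 G := card_le_r3 fun x hx y hy z hz _ _ hxz hxyz => by
    have hgap := hconv (hTS hx) (hTS hy) (hTS hz) hxyz
    rw [gapModulus_of_ne_zero g (sub_ne_zero.2 hxz)] at hgap
    linarith [(abs_lt.1 (hosc x hx y hy)).2, (abs_lt.1 (hosc z hz y hy)).2]
  calc N ≤ #S := hS
    _ ≤ (B / (g / 2) + 1) * #T := hcard
    _ ≤ (B / (g / 2) + 1) * r3 G := by gcongr

end Midconvex

section Translate

lemma exists_translate_card_ge {ι K : Type*} [Fintype ι] [AddCommGroup K] [MeasurableSpace K]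
    [MeasurableAdd K] (μ : Measure K) [IsProbabilityMeasure μ] [μ.IsAddLeftInvariant]
    {s : Set K} (hs : MeasurableSet s) (φ : ι → K) :
    ∃ θ : K, ∃ S : Finset ι, (∀ a ∈ S, φ a + θ ∈ s) ∧ Fintype.card ι * μ.real s ≤ #S := by
  classical
  have hint (a : ι) : Integrable (fun θ => s.indicator (1 : K → ℝ) (φ a + θ)) μ :=
    ((integrable_const 1).indicator hs).comp_add_left (φ a)
  obtain ⟨θ, hθ⟩ := exists_integral_le (integrable_finsetSum Finset.univ fun a _ => hint a)
  refine ⟨θ, Finset.univ.filter fun a => φ a + θ ∈ s, by simp, ?_⟩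
  calc Fintype.card ι * μ.real s
      = ∫ θ, ∑ a, s.indicator (1 : K → ℝ) (φ a + θ) ∂μ := by
        rw [integral_finsetSum _ fun a _ => hint a]
        simp [integral_add_left_eq_self (s.indicator (1 : K → ℝ)), integral_indicator_one hs]
    _ ≤ ∑ a, s.indicator (1 : K → ℝ) (φ a + θ) := hθ
    _ = #(Finset.univ.filter fun a => φ a + θ ∈ s) := by simp [indicator_apply]

lemma MidconvexOn.hasMidconvexSet {G K : Type*} [AddCommGroup G] [Fintype G]
    [SeminormedAddCommGroup K] [MeasurableSpace K] [MeasurableAdd K] {μ : Measure K}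
    [IsProbabilityMeasure μ] [μ.IsAddLeftInvariant] {s : Set K} {f : K → ℝ} {B δ : ℝ}
    (hconv : MidconvexOn s (fun u => ‖u‖ ^ 2 / 2) f) (hs : MeasurableSet s)
    (hf : ∀ x ∈ s, f x ∈ Icc 0 B) (hδ : 0 ≤ δ) (φ : G →+ K) (hφ : ∀ u ≠ 0, δ ≤ ‖φ u‖) :
    HasMidconvexSet G B (δ ^ 2 / 2) (Fintype.card G * μ.real s) := by
  obtain ⟨θ, S, hS, hcard⟩ := exists_translate_card_ge μ hs φ
  refine ⟨S, fun a => f (φ a + θ), fun a ha => hf _ (hS a ha), ?_, hcard⟩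
  have hpull := ((hconv.preimage_add_right θ).comp_addMonoidHom φ).mono_modulus
    (d' := gapModulus G (δ ^ 2 / 2)) fun u => ?_
  · exact fun x hx y hy z hz => hpull (hS x hx) (hS y hy) (hS z hz)
  · rcases eq_or_ne u 0 with rfl | hu
    · simp [gapModulus_zero]
    · rw [gapModulus_of_ne_zero _ hu, Function.comp_apply]
      gcongr
      exact hφ u hu

end Translate

section Circle

/-- The representative in `(0, 1]` of a point of the circle `ℝ / ℤ`. -/
noncomputable def rep (t : UnitAddCircle) : ℝ := AddCircle.equivIoc 1 0 t

lemma rep_mem (t : UnitAddCircle) : rep t ∈ Ioc (0 : ℝ) 1 := by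
  simpa only [rep, zero_add] using (AddCircle.equivIoc (1 : ℝ) 0 t).2

lemma coe_rep (t : UnitAddCircle) : (rep t : UnitAddCircle) = t := AddCircle.coe_equivIoc

lemma measurePreserving_rep :
    MeasurePreserving rep volume (volume.restrict (Ioc (0 : ℝ) 1)) := by
  have h : MeasurePreserving rep volume (volume.restrict (Ioc (0 : ℝ) (0 + 1))) :=
    (measurePreserving_subtype_coe measurableSet_Ioc).comp (AddCircle.measurePreserving_equivIoc 1)
  rwa [zero_add] at h

instance : IsProbabilityMeasure (volume : Measure UnitAddCircle) := ⟨UnitAddCircle.measure_univ⟩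

lemma norm_sub_le_abs_rep_sub (x z : UnitAddCircle) : ‖x - z‖ ≤ |rep x - rep z| := by
  conv_lhs => rw [← coe_rep x, ← coe_rep z, ← AddCircle.coe_sub]
  exact QuotientAddGroup.norm_mk_le_norm

lemma exists_int_rep_add_rep {x y z : UnitAddCircle} (h : x + z = y + y) :
    ∃ k : ℤ, rep x + rep z - 2 * rep y = k := by
  have hzero : ((rep x + rep z - 2 * rep y : ℝ) : UnitAddCircle) = 0 := by
    rw [two_mul, AddCircle.coe_sub, AddCircle.coe_add, AddCircle.coe_add, coe_rep, coe_rep, coe_rep,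
      h, sub_self]
  obtain ⟨k, hk⟩ := AddCircle.coe_eq_zero_iff _ |>.1 hzero
  exact ⟨k, by simpa using hk.symm⟩

lemma eq_zero_of_eq_intCast {a : ℝ} {k : ℤ} (hk : a = k) (ha : a ∈ Ioo (-1 : ℝ) 1) : a = 0 := by
  rw [hk] at ha
  have : k = 0 := Int.abs_lt_one_iff.1 (by exact_mod_cast abs_lt.2 ha)
  rw [hk, this, Int.cast_zero]

lemma add_sq_sub_two_mul_sq {a b c : ℝ} (h : a + c = 2 * b) :
    a ^ 2 + c ^ 2 - 2 * b ^ 2 = (a - c) ^ 2 / 2 := by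
  obtain rfl : b = (a + c) / 2 := by linarith
  ring

/-- The half circle, on which `rep ^ 2` is midpoint convex. -/
def halfCircle : Set UnitAddCircle := {t | rep t ≤ 1 / 2}

lemma measurableSet_halfCircle : MeasurableSet halfCircle :=
  measurePreserving_rep.measurable measurableSet_Iic

lemma volume_real_halfCircle : volume.real halfCircle = 1 / 2 := by
  have h : volume.real (rep ⁻¹' Iic (1 / 2)) = _ :=
    measurePreserving_rep.measureReal_preimage measurableSet_Iic.nullMeasurableSet
  rw [measureReal_restrict_apply measurableSet_Iic, Set.inter_comm, Ioc_inter_Iic] at h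
  exact h.trans (by norm_num)

lemma midconvexOn_halfCircle :
    MidconvexOn halfCircle (fun u => ‖u‖ ^ 2 / 2) fun t => rep t ^ 2 := by
  intro x hx y hy z hz hxyz
  obtain ⟨k, hk⟩ := exists_int_rep_add_rep hxyz
  rw [halfCircle, mem_ofPred_eq] at hx hy hz
  have hk0 := eq_zero_of_eq_intCast hk
    ⟨by linarith [(rep_mem x).1, (rep_mem z).1], by linarith [(rep_mem y).1]⟩
  rw [add_sq_sub_two_mul_sq (sub_eq_zero.1 hk0), ← sq_abs (rep x - rep z)]
  beta_reduce
  gcongr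
  exact norm_sub_le_abs_rep_sub x z

end Circle

section Planar

/-- Reduction of a number in `(0, 1]` modulo `1 / 2`, to `(0, 1 / 2]`. -/
noncomputable def halfFold (y : ℝ) : ℝ := if y ≤ 1 / 2 then y else y - 1 / 2

lemma halfFold_of_le {y : ℝ} (hy : y ≤ 1 / 2) : halfFold y = y := if_pos hy

lemma halfFold_mem {y : ℝ} (hy : y ∈ Ioc (0 : ℝ) 1) : halfFold y ∈ Ioc (0 : ℝ) (1 / 2) := by
  unfold halfFold
  split_ifs with h
  · exact ⟨hy.1, h⟩
  · exact ⟨by linarith, by linarith [hy.2]⟩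

lemma exists_int_two_mul_halfFold (y : ℝ) : ∃ j : ℤ, 2 * y = 2 * halfFold y + j := by
  unfold halfFold
  split_ifs
  · exact ⟨0, by simp⟩
  · exact ⟨1, by push_cast; ring⟩

/-- The part of the planar region over `(0, 1 / 2 - ε]`. -/
def leftPart (ε : ℝ) : Set (ℝ × ℝ) :=
  {p | p.1 ∈ Ioc 0 (1 / 2 - ε) ∧ p.2 ∈ Ioc 0 (1 / 2) ∧ p.2 < 1 / 6 + p.1}

/-- The part of the planar region over `(1 / 2, 3 / 4]`. It is invariant under `y ↦ y + 1 / 2`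
modulo `1`, so it is described through `halfFold`. -/
def rightPart : Set (ℝ × ℝ) :=
  {p | p.1 ∈ Ioc (1 / 2) (3 / 4) ∧ p.2 ∈ Ioc 0 1 ∧ 1 / 4 < halfFold p.2 ∧
    p.1 - 1 / 3 ≤ halfFold p.2}

/-- A subset of `(0, 1]²`, read modulo `ℤ²`, of area `7 / 24 - ε / 2` for `0 ≤ ε ≤ 1 / 6`. A
progression modulo `ℤ²` in it either is a progression in the plane, after applying `halfFold` to the
second coordinates, or has a large second difference of the square of the first coordinate. -/
def region (ε : ℝ) : Set (ℝ × ℝ) := leftPart ε ∪ rightPart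

variable {ε : ℝ} {p q r : ℝ × ℝ}

lemma mem_Ioc_of_mem_region (hε : 0 ≤ ε) (hp : p ∈ region ε) :
    p.1 ∈ Ioc (0 : ℝ) (3 / 4) ∧ p.2 ∈ Ioc (0 : ℝ) 1 := by
  rcases hp with ⟨hx, hy, -⟩ | ⟨hx, hy, -⟩
  · exact ⟨⟨hx.1, by linarith [hx.2]⟩, ⟨hy.1, by linarith [hy.2]⟩⟩
  · exact ⟨⟨by linarith [hx.1], hx.2⟩, hy⟩

lemma halfFold_add_halfFold_of_leftPart (hp : p ∈ leftPart ε) (hq : q ∈ leftPart ε)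
    (hr : r ∈ leftPart ε) {l : ℤ} (hl : p.2 + r.2 - 2 * q.2 = l) :
    halfFold p.2 + halfFold r.2 = 2 * halfFold q.2 := by
  obtain ⟨-, hp, -⟩ := hp
  obtain ⟨-, hq, -⟩ := hq
  obtain ⟨-, hr, -⟩ := hr
  rw [halfFold_of_le hp.2, halfFold_of_le hq.2, halfFold_of_le hr.2]
  linarith [eq_zero_of_eq_intCast hl
    ⟨by linarith [hp.1, hq.2, hr.1], by linarith [hp.2, hq.1, hr.2]⟩]

lemma halfFold_add_halfFold_of_rightPart (hp : p ∈ rightPart) (hq : q ∈ rightPart)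
    (hr : r ∈ rightPart) {l : ℤ} (hl : p.2 + r.2 - 2 * q.2 = l) :
    halfFold p.2 + halfFold r.2 = 2 * halfFold q.2 := by
  obtain ⟨-, hyp, hp, -⟩ := hp
  obtain ⟨-, hyq, hq, -⟩ := hq
  obtain ⟨-, hyr, hr, -⟩ := hr
  obtain ⟨i, hi⟩ := exists_int_two_mul_halfFold p.2
  obtain ⟨j, hj⟩ := exists_int_two_mul_halfFold q.2
  obtain ⟨k, hk⟩ := exists_int_two_mul_halfFold r.2
  have hint : 2 * (halfFold p.2 + halfFold r.2 - 2 * halfFold q.2) =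
      ((2 * l - i - k + 2 * j : ℤ) : ℝ) := by
    push_cast
    linarith
  linarith [eq_zero_of_eq_intCast hint
    ⟨by linarith [(halfFold_mem hyq).2], by linarith [(halfFold_mem hyp).2, (halfFold_mem hyr).2]⟩]

/- The slanted boundaries are parallel and placed so that here `p.2 + r.2 - 2 * halfFold q.2`, an
integer, lies strictly between `-1` and `0`. -/
lemma add_fst_ne_of_leftPart_of_rightPart (hp : p ∈ leftPart ε) (hq : q ∈ rightPart)
    (hr : r ∈ leftPart ε) {l : ℤ} (hl : p.2 + r.2 - 2 * q.2 = l) :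
    p.1 + r.1 - 2 * q.1 ≠ -1 := by
  intro hk
  obtain ⟨-, hp, hpxy⟩ := hp
  obtain ⟨-, hyq, -, hqxy⟩ := hq
  obtain ⟨-, hr, hrxy⟩ := hr
  obtain ⟨j, hj⟩ := exists_int_two_mul_halfFold q.2
  have hint : p.2 + r.2 - 2 * halfFold q.2 = ((l + j : ℤ) : ℝ) := by
    push_cast
    linarith
  have hneg : p.2 + r.2 - 2 * halfFold q.2 < 0 := by linarith
  exact hneg.ne (eq_zero_of_eq_intCast hint
    ⟨by linarith [hp.1, hr.1, (halfFold_mem hyq).2], by linarith⟩)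

lemma halfFold_add_halfFold_or_lt_abs_sub (hp : p ∈ region ε) (hq : q ∈ region ε)
    (hr : r ∈ region ε) {l : ℤ} (hε : 0 ≤ ε) (hk : p.1 + r.1 = 2 * q.1)
    (hl : p.2 + r.2 - 2 * q.2 = l) :
    halfFold p.2 + halfFold r.2 = 2 * halfFold q.2 ∨ ε < |p.1 - r.1| := by
  rcases hp with hp | hp <;> rcases hr with hr | hr
  · left
    refine halfFold_add_halfFold_of_leftPart hp (hq.resolve_right fun hq => ?_) hr hl
    linarith [hp.1.2, hq.1.1, hr.1.2]
  · right
    rw [lt_abs]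
    right
    linarith [hp.1.2, hr.1.1]
  · right
    rw [lt_abs]
    left
    linarith [hp.1.1, hr.1.2]
  · left
    refine halfFold_add_halfFold_of_rightPart hp (hq.resolve_left fun hq => ?_) hr hl
    linarith [hp.1.1, hq.1.2, hr.1.1]

lemma region_progression_dichotomy (hε : ε ∈ Icc (0 : ℝ) 1) (hp : p ∈ region ε) (hq : q ∈ region ε)
    (hr : r ∈ region ε) {k l : ℤ} (hk : p.1 + r.1 - 2 * q.1 = k) (hl : p.2 + r.2 - 2 * q.2 = l) :
    ε ^ 2 / 2 ≤ p.1 ^ 2 + r.1 ^ 2 - 2 * q.1 ^ 2 ∨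
      p.1 + r.1 = 2 * q.1 ∧ halfFold p.2 + halfFold r.2 = 2 * halfFold q.2 := by
  obtain ⟨hpx, -⟩ := mem_Ioc_of_mem_region hε.1 hp
  obtain ⟨hqx, -⟩ := mem_Ioc_of_mem_region hε.1 hq
  obtain ⟨hrx, -⟩ := mem_Ioc_of_mem_region hε.1 hr
  have hk_lower : -2 < k := by
    have : (-2 : ℝ) < k := by linarith [hpx.1, hqx.2, hrx.1]
    exact_mod_cast this
  have hk_upper : k < 2 := by
    have : (k : ℝ) < 2 := by linarith [hpx.2, hqx.1, hrx.2]
    exact_mod_cast this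
  obtain rfl | rfl | rfl : k = -1 ∨ k = 0 ∨ k = 1 := by omega
  · exfalso
    push_cast at hk
    have hq' : q ∈ rightPart := hq.resolve_left fun hq => by linarith [hq.1.2, hpx.1, hrx.1, hε.1]
    have hp' : p ∈ leftPart ε := hp.resolve_right fun hp => by linarith [hp.1.1, hqx.2, hrx.1]
    have hr' : r ∈ leftPart ε := hr.resolve_right fun hr => by linarith [hr.1.1, hqx.2, hpx.1]
    exact add_fst_ne_of_leftPart_of_rightPart hp' hq' hr' hl hk
  · have hk' : p.1 + r.1 = 2 * q.1 := by simpa [sub_eq_zero] using hk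
    refine (halfFold_add_halfFold_or_lt_abs_sub hp hq hr hε.1 hk' hl).symm.imp (fun hgap => ?_)
      fun h => ⟨hk', h⟩
    rw [add_sq_sub_two_mul_sq hk', ← sq_abs (p.1 - r.1)]
    have := hε.1
    gcongr
  · left
    have hmid : p.1 + r.1 = 1 + 2 * q.1 := by push_cast at hk; linarith
    have hends : (1 + 2 * q.1) ^ 2 ≤ 2 * (p.1 ^ 2 + r.1 ^ 2) := hmid ▸ add_sq_le
    nlinarith [hε.1, hε.2, hqx.1]

end Planar

section Torus

variable {ε : ℝ}

/-- The region, as a subset of the torus. -/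
def torusRegion (ε : ℝ) : Set (UnitAddCircle × UnitAddCircle) := Prod.map rep rep ⁻¹' region ε

/-- The midpoint convex weight on `torusRegion ε`. The coefficient `2 / ε ^ 2` makes a second
difference of at least `ε ^ 2 / 2` in the first coordinate outweigh that of `halfFold ^ 2`, which is
at least `-1 / 2`. -/
noncomputable def torusWeight (ε : ℝ) (p : UnitAddCircle × UnitAddCircle) : ℝ :=
  2 / ε ^ 2 * rep p.1 ^ 2 + halfFold (rep p.2) ^ 2

lemma torusWeight_mem (ε : ℝ) (p : UnitAddCircle × UnitAddCircle) :
    torusWeight ε p ∈ Icc 0 (2 / ε ^ 2 + 1) := by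
  have hx : rep p.1 ^ 2 ≤ 1 := pow_le_one₀ (rep_mem _).1.le (rep_mem _).2
  have hr := halfFold_mem (rep_mem p.2)
  have hr' : halfFold (rep p.2) ^ 2 ≤ 1 := pow_le_one₀ hr.1.le (by linarith [hr.2])
  refine ⟨by unfold torusWeight; positivity, add_le_add ?_ hr'⟩
  exact mul_le_of_le_one_right (by positivity) hx

lemma norm_sub_le_abs_halfFold_sub {x y z : UnitAddCircle} (h : x + z = y + y)
    (hr : halfFold (rep x) + halfFold (rep z) = 2 * halfFold (rep y)) :
    ‖x - z‖ ≤ |halfFold (rep x) - halfFold (rep z)| := by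
  have hdouble (t : UnitAddCircle) : ((2 * halfFold (rep t) : ℝ) : UnitAddCircle) = t + t := by
    obtain ⟨j, hj⟩ := exists_int_two_mul_halfFold (rep t)
    rw [← sub_eq_iff_eq_add] at hj
    rw [← hj, two_mul, AddCircle.coe_sub, AddCircle.coe_add, coe_rep]
    simp
  have hsub : x - z = ((halfFold (rep x) - halfFold (rep z) : ℝ) : UnitAddCircle) := by
    rw [show halfFold (rep x) - halfFold (rep z) = 2 * halfFold (rep y) - 2 * halfFold (rep z) by
      linarith, AddCircle.coe_sub, hdouble, hdouble, ← h]
    abel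
  rw [hsub]
  exact QuotientAddGroup.norm_mk_le_norm

lemma norm_sq_le_add_norm_sq {E F : Type*} [SeminormedAddCommGroup E] [SeminormedAddCommGroup F]
    (u : E × F) : ‖u‖ ^ 2 ≤ ‖u.1‖ ^ 2 + ‖u.2‖ ^ 2 := by
  rw [Prod.norm_def]
  rcases max_choice ‖u.1‖ ‖u.2‖ with h | h <;> rw [h]
  · exact le_add_of_nonneg_right (sq_nonneg _)
  · exact le_add_of_nonneg_left (sq_nonneg _)

lemma midconvexOn_torusRegion (hε : 0 < ε) (hε1 : ε ≤ 1) :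
    MidconvexOn (torusRegion ε) (fun u => ‖u‖ ^ 2 / 2) (torusWeight ε) := by
  intro x hx y hy z hz hxyz
  have hfst := congrArg Prod.fst hxyz
  have hsnd := congrArg Prod.snd hxyz
  obtain ⟨k, hk⟩ := exists_int_rep_add_rep hfst
  obtain ⟨l, hl⟩ := exists_int_rep_add_rep hsnd
  have hx₁ : ‖x.1 - z.1‖ ≤ |rep x.1 - rep z.1| := norm_sub_le_abs_rep_sub _ _
  rcases region_progression_dichotomy ⟨hε.le, hε1⟩ hx hy hz hk hl with hgap | ⟨hprog, hfold⟩
  · have hnorm (u : UnitAddCircle) : ‖u‖ ≤ 1 / 2 := by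
      simpa using AddCircle.norm_le_half_period 1 one_ne_zero (x := u)
    have hfst_ge : 1 ≤ 2 / ε ^ 2 * (rep x.1 ^ 2 + rep z.1 ^ 2 - 2 * rep y.1 ^ 2) :=
      calc (1 : ℝ) = 2 / ε ^ 2 * (ε ^ 2 / 2) := by field_simp
        _ ≤ _ := by gcongr; exact hgap
    have hy₂ := halfFold_mem (rep_mem y.2)
    have hsnd_ge : halfFold (rep y.2) ^ 2 ≤ (1 / 2) ^ 2 := pow_le_pow_left₀ hy₂.1.le hy₂.2 2
    have hu : ‖x - z‖ ^ 2 ≤ (1 / 2) ^ 2 :=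
      pow_le_pow_left₀ (norm_nonneg _) (max_le (hnorm _) (hnorm _)) 2
    simp only [torusWeight]
    nlinarith [sq_nonneg (halfFold (rep x.2)), sq_nonneg (halfFold (rep z.2))]
  · have hx₂ := norm_sub_le_abs_halfFold_sub hsnd hfold
    have hcoeff : 1 ≤ 2 / ε ^ 2 := by
      rw [one_le_div (by positivity)]
      exact (pow_le_one₀ hε.le hε1).trans one_le_two
    have hu := norm_sq_le_add_norm_sq (x - z)
    have h₁ := pow_le_pow_left₀ (norm_nonneg _) hx₁ 2
    have h₂ := pow_le_pow_left₀ (norm_nonneg _) hx₂ 2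
    rw [sq_abs] at h₁ h₂
    have hfst_eq := add_sq_sub_two_mul_sq hprog
    have hsnd_eq := add_sq_sub_two_mul_sq hfold
    simp only [torusWeight, Prod.map_fst, Prod.map_snd, Prod.fst_sub, Prod.snd_sub] at *
    nlinarith [sq_nonneg (rep x.1 - rep z.1)]

end Torus

section Area

variable {ε : ℝ} {p : ℝ × ℝ}

lemma measurable_halfFold : Measurable halfFold :=
  Measurable.ite measurableSet_Iic measurable_id (measurable_id.sub_const _)

lemma measurableSet_leftPart (ε : ℝ) : MeasurableSet (leftPart ε) :=
  (measurable_fst measurableSet_Ioc).inter <| (measurable_snd measurableSet_Ioc).inter <|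
    measurableSet_lt measurable_snd (measurable_fst.const_add _)

lemma measurableSet_rightPart : MeasurableSet rightPart :=
  (measurable_fst measurableSet_Ioc).inter <| (measurable_snd measurableSet_Ioc).inter <|
    (measurableSet_lt measurable_const (measurable_halfFold.comp measurable_snd)).inter <|
      measurableSet_le (measurable_fst.sub_const _) (measurable_halfFold.comp measurable_snd)

lemma measurableSet_region (ε : ℝ) : MeasurableSet (region ε) :=
  (measurableSet_leftPart ε).union measurableSet_rightPart

lemma region_subset_unitSquare (hε : 0 ≤ ε) : region ε ⊆ Ioc 0 1 ×ˢ Ioc 0 1 := fun _ hp =>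
  have ⟨hx, hy⟩ := mem_Ioc_of_mem_region hε hp
  ⟨⟨hx.1, by linarith [hx.2]⟩, hy⟩

lemma volume_region_ne_top (hε : 0 ≤ ε) : volume (region ε) ≠ ⊤ :=
  measure_ne_top_of_subset (region_subset_unitSquare hε) (by simp [Measure.volume_eq_prod])

lemma integral_max_const_id {a b c : ℝ} (hac : a ≤ c) (hcb : c ≤ b) :
    ∫ x in a..b, max c x = (b ^ 2 + c ^ 2) / 2 - a * c := by
  have hcont : Continuous fun x : ℝ => max c x := by fun_prop
  have hleft : ∫ x in a..c, max c x = ∫ _ in a..c, c :=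
    intervalIntegral.integral_congr fun x hx => max_eq_left (uIcc_of_le hac ▸ hx).2
  have hright : ∫ x in c..b, max c x = ∫ x in c..b, x :=
    intervalIntegral.integral_congr fun x hx => max_eq_right (uIcc_of_le hcb ▸ hx).1
  rw [← intervalIntegral.integral_add_adjacent_intervals (hcont.intervalIntegrable a c)
    (hcont.intervalIntegrable c b), hleft, hright, intervalIntegral.integral_const, integral_id,
    smul_eq_mul]
  ring

lemma volume_real_regionBetween_Ioo {f g : ℝ → ℝ} {a b : ℝ} (hf : Continuous f) (hg : Continuous g)
    (hab : a ≤ b) (hfg : ∀ x ∈ Ioo a b, f x ≤ g x) :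
    volume.real (regionBetween f g (Ioo a b)) = ∫ x in a..b, (g x - f x) := by
  have hint {h : ℝ → ℝ} (hh : Continuous h) : IntegrableOn h (Ioo a b) :=
    hh.integrableOn_Icc.mono_set Ioo_subset_Icc_self
  rw [intervalIntegral.integral_of_le hab, integral_Ioc_eq_integral_Ioo, measureReal_def,
    Measure.volume_eq_prod,
    volume_regionBetween_eq_integral (hint hf) (hint hg) measurableSet_Ioo hfg,
    ENNReal.toReal_ofReal]
  · rfl
  · exact setIntegral_nonneg measurableSet_Ioo fun x hx => sub_nonneg.2 (hfg x hx)

lemma le_volume_real_leftPart (hε : 0 ≤ ε) (hε6 : ε ≤ 1 / 6) :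
    7 / 36 - ε / 2 ≤ volume.real (leftPart ε) := by
  have hsub : regionBetween 0 (fun x => 1 / 2 + x - max (1 / 3) x) (Ioo 0 (1 / 2 - ε)) ⊆
      leftPart ε := by
    rintro ⟨x, y⟩ ⟨hx, hy₀, hy⟩
    dsimp only at hy
    refine ⟨Ioo_subset_Ioc_self hx, ⟨hy₀, ?_⟩, ?_⟩
    · linarith [le_max_right (1 / 3) x]
    · linarith [le_max_left (1 / 3) x]
  refine le_trans (le_of_eq ?_) (measureReal_mono hsub
    (measure_ne_top_of_subset subset_union_left (volume_region_ne_top hε)))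
  rw [volume_real_regionBetween_Ioo continuous_zero (by fun_prop) (by linarith) fun x hx => ?_]
  · simp only [Pi.zero_apply, sub_zero]
    rw [intervalIntegral.integral_sub (Continuous.intervalIntegrable (by fun_prop) _ _)
      (Continuous.intervalIntegrable (by fun_prop) _ _),
      intervalIntegral.integral_add (Continuous.intervalIntegrable (by fun_prop) _ _)
      (Continuous.intervalIntegrable (by fun_prop) _ _),
      integral_max_const_id (by norm_num) (by linarith), intervalIntegral.integral_const,
      integral_id, smul_eq_mul]
    ring
  · exact sub_nonneg.2 (max_le (by linarith [hx.1]) (by linarith))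

/-- For `c = 0` and `c = 1 / 2`, the two components of the interior of `rightPart`. -/
def rightPiece (c : ℝ) : Set (ℝ × ℝ) :=
  regionBetween (fun x => max (7 / 12) x - 1 / 3 + c) (fun _ => 1 / 2 + c) (Ioo (1 / 2) (3 / 4))

lemma volume_real_rightPiece (c : ℝ) : volume.real (rightPiece c) = 7 / 144 := by
  rw [rightPiece, volume_real_regionBetween_Ioo (by fun_prop) (by fun_prop) (by norm_num)
    fun x hx => ?_]
  · calc ∫ x in (1 / 2 : ℝ)..3 / 4, (1 / 2 + c - (max (7 / 12) x - 1 / 3 + c))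
        = ∫ x in (1 / 2 : ℝ)..3 / 4, (5 / 6 - max (7 / 12) x) := by congr with x; ring
      _ = 7 / 144 := by
        rw [intervalIntegral.integral_sub (Continuous.intervalIntegrable (by fun_prop) _ _)
          (Continuous.intervalIntegrable (by fun_prop) _ _),
          integral_max_const_id (by norm_num) (by norm_num), intervalIntegral.integral_const]
        norm_num
  · linarith [max_le (by norm_num : (7 / 12 : ℝ) ≤ 3 / 4) hx.2.le]

lemma snd_mem_Ioo_of_mem_rightPiece {c : ℝ} (hp : p ∈ rightPiece c) :
    p.2 ∈ Ioo (1 / 4 + c) (1 / 2 + c) :=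
  ⟨by linarith [hp.2.1, le_max_left (7 / 12) p.1], hp.2.2⟩

lemma rightPiece_subset {c : ℝ} (hc : c ∈ Icc (0 : ℝ) (1 / 2))
    (hfold : ∀ y ∈ Ioo (1 / 4 + c) (1 / 2 + c), halfFold y = y - c) :
    rightPiece c ⊆ rightPart := by
  intro p hp
  have hy := snd_mem_Ioo_of_mem_rightPiece hp
  have hr := hfold p.2 hy
  refine ⟨Ioo_subset_Ioc_self hp.1, ⟨by linarith [hy.1, hc.1], by linarith [hy.2, hc.2]⟩,
    by linarith [hy.1], ?_⟩
  linarith [hp.2.1, le_max_right (7 / 12) p.1]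

lemma le_volume_real_rightPart : 7 / 72 ≤ volume.real rightPart := by
  have hmeas : MeasurableSet (rightPiece (1 / 2)) :=
    measurableSet_regionBetween (by fun_prop) (by fun_prop) measurableSet_Ioo
  have hdisj : Disjoint (rightPiece 0) (rightPiece (1 / 2)) :=
    disjoint_left.2 fun _ h₀ h₁ => by
      linarith [(snd_mem_Ioo_of_mem_rightPiece h₀).2, (snd_mem_Ioo_of_mem_rightPiece h₁).1]
  have hlower : rightPiece 0 ⊆ rightPart := rightPiece_subset (by norm_num) fun y hy => by
    rw [halfFold_of_le (by linarith [hy.2]), sub_zero]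
  have hupper : rightPiece (1 / 2) ⊆ rightPart := rightPiece_subset (by norm_num) fun y hy =>
    if_neg (by linarith [hy.1])
  have hfin : volume rightPart ≠ ⊤ :=
    measure_ne_top_of_subset subset_union_right (volume_region_ne_top le_rfl)
  calc (7 / 72 : ℝ) = volume.real (rightPiece 0) + volume.real (rightPiece (1 / 2)) := by
        rw [volume_real_rightPiece, volume_real_rightPiece]
        norm_num
    _ = volume.real (rightPiece 0 ∪ rightPiece (1 / 2)) :=
        (measureReal_union hdisj hmeas (measure_ne_top_of_subset hlower hfin)
          (measure_ne_top_of_subset hupper hfin)).symm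
    _ ≤ volume.real rightPart := measureReal_mono (union_subset hlower hupper) hfin

lemma le_volume_real_region (hε : 0 ≤ ε) (hε6 : ε ≤ 1 / 6) :
    7 / 24 - ε / 2 ≤ volume.real (region ε) := by
  have hdisj : Disjoint (leftPart ε) rightPart :=
    disjoint_left.2 fun _ hl hr => by linarith [hl.1.2, hr.1.1]
  have hfin := volume_region_ne_top hε
  rw [region, measureReal_union hdisj measurableSet_rightPart
    (measure_ne_top_of_subset subset_union_left hfin)
    (measure_ne_top_of_subset subset_union_right hfin)]
  linarith [le_volume_real_leftPart hε hε6, le_volume_real_rightPart]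

lemma measurableSet_torusRegion (ε : ℝ) : MeasurableSet (torusRegion ε) :=
  (measurePreserving_rep.measurable.prodMap measurePreserving_rep.measurable)
    (measurableSet_region ε)

lemma volume_real_torusRegion (hε : 0 ≤ ε) :
    volume.real (torusRegion ε) = volume.real (region ε) := by
  have h := (measurePreserving_rep.prod measurePreserving_rep).measureReal_preimage
    (measurableSet_region ε).nullMeasurableSet
  rw [Measure.prod_restrict, measureReal_restrict_apply (measurableSet_region ε),
    inter_eq_left.2 (region_subset_unitSquare hε)] at h
  exact h

end Area

section ZMod

variable {M : ℕ} {ε : ℝ}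

lemma inv_le_norm_toAddCircle {m : ℕ} [NeZero m] (hm : m ≤ M) {u : ZMod m} (hu : u ≠ 0) :
    (M : ℝ)⁻¹ ≤ ‖ZMod.toAddCircle u‖ := by
  have hne : ZMod.toAddCircle u ≠ 0 := ZMod.toAddCircle_eq_zero.not.2 hu
  have hfin : IsOfFinAddOrder (ZMod.toAddCircle u) :=
    AddMonoidHom.isOfFinAddOrder _ (isOfFinAddOrder_of_finite u)
  have hord : addOrderOf (ZMod.toAddCircle u) ≤ M := by
    have hdvd := (addOrderOf_map_dvd ZMod.toAddCircle u).trans addOrderOf_dvd_card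
    rw [ZMod.card] at hdvd
    exact (Nat.le_of_dvd (NeZero.pos m) hdvd).trans hm
  have hM : (0 : ℝ) < M := Nat.cast_pos.2 ((NeZero.pos m).trans_le hm)
  rw [inv_le_iff_one_le_mul₀' hM]
  calc (1 : ℝ) ≤ addOrderOf (ZMod.toAddCircle u) • ‖ZMod.toAddCircle u‖ :=
        AddCircle.le_add_order_smul_norm_of_isOfFinAddOrder hfin hne
    _ ≤ M * ‖ZMod.toAddCircle u‖ := by
        rw [nsmul_eq_mul]
        gcongr

lemma hasMidconvexSet_zmod {m : ℕ} [NeZero m] (hm : m ≤ M) :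
    HasMidconvexSet (ZMod m) 1 ((M : ℝ)⁻¹ ^ 2 / 2) (m * (1 / 2)) := by
  have h := midconvexOn_halfCircle.hasMidconvexSet (μ := volume) measurableSet_halfCircle
    (fun t _ => ⟨sq_nonneg (rep t), pow_le_one₀ (rep_mem t).1.le (rep_mem t).2⟩)
    (inv_nonneg.2 M.cast_nonneg) (ZMod.toAddCircle (N := m)) fun _ => inv_le_norm_toAddCircle hm
  rwa [volume_real_halfCircle, ZMod.card] at h

lemma hasMidconvexSet_zmod_prod {m₁ m₂ : ℕ} [NeZero m₁] [NeZero m₂] (hm₁ : m₁ ≤ M) (hm₂ : m₂ ≤ M)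
    (hε : 0 < ε) (hε6 : ε ≤ 1 / 6) :
    HasMidconvexSet (ZMod m₁ × ZMod m₂) (2 / ε ^ 2 + 1) ((M : ℝ)⁻¹ ^ 2 / 2)
      (m₁ * m₂ * (7 / 24 - ε / 2)) := by
  have hφ (u : ZMod m₁ × ZMod m₂) (hu : u ≠ 0) :
      (M : ℝ)⁻¹ ≤ ‖AddMonoidHom.prodMap ZMod.toAddCircle ZMod.toAddCircle u‖ := by
    by_cases hfst : u.1 = 0
    · have hsnd : u.2 ≠ 0 := fun hsnd => hu (Prod.ext hfst hsnd)
      exact (inv_le_norm_toAddCircle hm₂ hsnd).trans (le_max_right _ _)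
    · exact (inv_le_norm_toAddCircle hm₁ hfst).trans (le_max_left _ _)
  have h := (midconvexOn_torusRegion hε (by linarith)).hasMidconvexSet
    (μ := (volume : Measure UnitAddCircle).prod volume) (measurableSet_torusRegion ε)
    (fun p _ => torusWeight_mem ε p) (inv_nonneg.2 M.cast_nonneg) _ hφ
  refine h.mono le_rfl ?_
  rw [Fintype.card_prod, ZMod.card, ZMod.card, Nat.cast_mul, ← Measure.volume_eq_prod,
    volume_real_torusRegion hε.le]
  gcongr
  exact le_volume_real_region hε.le hε6

lemma hasMidconvexSet_pi_zmod (hε : 0 < ε) (hε6 : ε ≤ 1 / 6) (n : ℕ) :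
    ∀ (m : Fin n → ℕ) [∀ i, NeZero (m i)], (∀ i, m i ≤ M) →
      HasMidconvexSet (∀ i, ZMod (m i)) (n * (2 / ε ^ 2 + 1)) ((M : ℝ)⁻¹ ^ 2 / 2)
        ((7 / 24 - ε / 2) ^ (n / 2) * (1 / 2) ^ (n % 2) * ∏ i, (m i : ℝ)) := by
  induction n using Nat.twoStepInduction with
  | zero =>
    intro m _ _
    exact (hasMidconvexSet_of_subsingleton _).mono (by simp) (by simp)
  | one =>
    intro m _ hm
    have h := (hasMidconvexSet_zmod (hm 0)).congr (AddEquiv.piUnique fun i => ZMod (m i)).symm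
    have hbound : 0 ≤ 2 / ε ^ 2 := by positivity
    exact h.mono (by push_cast; linarith) (by simp [mul_comm])
  | more n ih _ =>
    intro m _ hm
    have hpair := hasMidconvexSet_zmod_prod (hm 0) (hm 1) hε hε6
    have htail := ih (fun i => m i.succ.succ) fun i => hm _
    have e : ((ZMod (m 0) × ZMod (m 1)) × ∀ i : Fin n, ZMod (m i.succ.succ)) ≃+
        ∀ i : Fin (n + 2), ZMod (m i) :=
      AddEquiv.prodAssoc.trans <|
        ((AddEquiv.refl (ZMod (m 0))).prodCongr
          (Fin.consLinearEquiv ℤ fun i : Fin (n + 1) => ZMod (m i.succ)).toAddEquiv).trans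
          (Fin.consLinearEquiv ℤ fun i => ZMod (m i)).toAddEquiv
    have hdensity : 0 ≤ 7 / 24 - ε / 2 := by linarith
    have hbound : 0 ≤ 2 / ε ^ 2 + 1 := by positivity
    refine ((hpair.prod (by positivity) (by positivity) htail).congr e).mono
      (by push_cast; linarith) (le_of_eq ?_)
    rw [Fin.prod_univ_succ, Fin.prod_univ_succ, Nat.add_div_right _ two_pos, Nat.add_mod_right,
      pow_succ]
    simp only [Fin.succ_zero_eq_one]
    ring

end ZMod

section Numerics

lemma density_lower_bound {n : ℕ} (hn : 0 < n) :
    3 / 7 * (7 / 24 : ℝ) ^ ((n : ℝ) / 2) ≤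
      (7 / 24 - 1 / (6 * n) / 2 : ℝ) ^ (n / 2) * (1 / 2) ^ (n % 2) := by
  have hn₁ : (1 : ℝ) ≤ n := Nat.one_le_cast.2 hn
  have hfactor : (7 / 24 - 1 / (6 * n) / 2 : ℝ) = 7 / 24 * (1 + -(2 / (7 * n))) := by
    field_simp
    ring
  have hbernoulli : (6 / 7 : ℝ) ≤ (1 + -(2 / (7 * n))) ^ (n / 2) := by
    have hx : 2 / (7 * n : ℝ) ≤ 2 := by
      rw [div_le_iff₀ (by positivity)]
      linarith
    calc (6 / 7 : ℝ) = 1 + (n / 2 : ℝ) * -(2 / (7 * n)) := by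
          field_simp
          norm_num
      _ ≤ 1 + (n / 2 : ℕ) * -(2 / (7 * n)) := by
          rw [mul_neg, mul_neg]
          gcongr
          exact Nat.cast_div_le
      _ ≤ _ := one_add_mul_le_pow (by linarith) _
  have hpow : (7 / 24 : ℝ) ^ ((n : ℝ) / 2) ≤ (7 / 24) ^ (n / 2) := by
    rw [← Real.rpow_natCast]
    exact Real.rpow_le_rpow_of_exponent_ge (by norm_num) (by norm_num) Nat.cast_div_le
  have hodd : (1 / 2 : ℝ) ≤ (1 / 2) ^ (n % 2) := by
    rcases Nat.mod_two_eq_zero_or_one n with h | h <;> norm_num [h]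
  rw [hfactor, mul_pow]
  calc 3 / 7 * (7 / 24 : ℝ) ^ ((n : ℝ) / 2) ≤ 3 / 7 * (7 / 24) ^ (n / 2) := by gcongr
    _ = (7 / 24) ^ (n / 2) * (6 / 7) * (1 / 2) := by ring
    _ ≤ _ := by gcongr

lemma level_count_le {n M : ℕ} (hn : 0 < n) (hM : 0 < M) :
    n * (2 / (1 / (6 * n) : ℝ) ^ 2 + 1) / ((M : ℝ)⁻¹ ^ 2 / 2 / 2) + 1 ≤
      3 / 7 * (10 ^ 6 * (M : ℝ) ^ 2 * (n : ℝ) ^ 3) := by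
  have hn₁ : (1 : ℝ) ≤ n := Nat.one_le_cast.2 hn
  have hM₁ : (1 : ℝ) ≤ M := Nat.one_le_cast.2 hM
  have hMn : (M : ℝ) ^ 2 * n ≤ (M : ℝ) ^ 2 * (n : ℝ) ^ 3 := by
    gcongr
    exact le_self_pow₀ hn₁ three_ne_zero
  have hone : (1 : ℝ) ≤ (M : ℝ) ^ 2 * n := one_le_mul_of_one_le_of_one_le (one_le_pow₀ hM₁) hn₁
  calc n * (2 / (1 / (6 * n) : ℝ) ^ 2 + 1) / ((M : ℝ)⁻¹ ^ 2 / 2 / 2) + 1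
      = 288 * ((M : ℝ) ^ 2 * (n : ℝ) ^ 3) + 4 * ((M : ℝ) ^ 2 * n) + 1 := by
        field_simp
        ring
    _ ≤ _ := by linarith

end Numerics

theorem stmt_19 (n : ℕ) (hn : 0 < n) (m : Fin n → ℕ) (M : ℕ)
    (hm : ∀ i, 2 ≤ m i ∧ m i ≤ M) :
    (r3 (∀ i : Fin n, ZMod (m i)) : ℝ) ≥
      (7/24 : ℝ) ^ ((n : ℝ)/2) / (10^6 * (M:ℝ)^2 * (n:ℝ)^3) * ∏ i, (m i : ℝ) := by
  have : ∀ i, NeZero (m i) := fun i => ⟨by have := (hm i).1; omega⟩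
  have hM : 0 < M := by have := hm ⟨0, hn⟩; omega
  have hε6 : 1 / (6 * n : ℝ) ≤ 1 / 6 :=
    one_div_le_one_div_of_le (by norm_num) (by linarith [(Nat.one_le_cast (α := ℝ)).2 hn])
  have hr3 := (hasMidconvexSet_pi_zmod (by positivity) hε6 n m fun i => (hm i).2).le_mul_r3
    (by positivity) (by positivity)
  have hlower := mul_le_mul_of_nonneg_right (density_lower_bound hn)
    (∏ i, m i).cast_nonneg
  have hupper := mul_le_mul_of_nonneg_right (level_count_le hn hM)
    (r3 (∀ i, ZMod (m i))).cast_nonneg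
  rw [ge_iff_le, div_mul_eq_mul_div, div_le_iff₀ (by positivity)]
  push_cast at hlower
  linarith
end
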